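/- Let dμ = e^{−V} dx and dν = e^{−W} dx be probability measures on ℝⁿ with V, W : ℝⁿ → ℝ twice continuously differentiable and V finite everywhere (so μ is supported on all of ℝⁿ). Suppose there exist α > 0, a symmetric positive semidefinite matrix A, and a symmetric positive definite matrix G such that Tr(A ∇²V(x)) ≤ α and ∇²W(x) ≥ G^{-1} for all x ∈ ℝⁿ. Let Φ : ℝⁿ → ℝ be a twice continuously differentiable convex function whose gradient ∇Φ pushes μ forward to ν (the Brenier map). Then Tr(A ∇²Φ(x)) ≤ √(α · Tr(AG)) for all x ∈ ℝⁿ, i.e. ‖div(A∇Φ)‖_{L^∞} ≤ √(α · Tr(AG)). -/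

import Mathlib

open MeasureTheory Matrix
open scoped ENNReal

noncomputable section

/-- The gradient of a function on `ℝⁿ`, as a vector of partial derivatives. -/
def gradVec {n : ℕ} (Φ : (Fin n → ℝ) → ℝ) (x : Fin n → ℝ) : Fin n → ℝ :=
  fun i => fderiv ℝ Φ x (Pi.single i 1)

/-- The Hessian of a function on `ℝⁿ`, as a matrix of second partial derivatives. -/
def hessMat {n : ℕ} (f : (Fin n → ℝ) → ℝ) (x : Fin n → ℝ) :
    Matrix (Fin n) (Fin n) ℝ :=
  Matrix.of fun i j => fderiv ℝ (fun y => fderiv ℝ f y (Pi.single j 1)) x (Pi.single i 1)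

/-- The continuous linear functional `x ↦ v ⬝ᵥ x`. -/
def dotCLM {n : ℕ} (v : Fin n → ℝ) : (Fin n → ℝ) →L[ℝ] ℝ :=
  ∑ i, v i • ContinuousLinearMap.proj i

/-- The continuous linear map `x ↦ M *ᵥ x`. -/
def mulVecCLM {n : ℕ} (M : Matrix (Fin n) (Fin n) ℝ) : (Fin n → ℝ) →L[ℝ] (Fin n → ℝ) :=
  LinearMap.toContinuousLinearMap M.mulVecLin

section Calculus

variable {n : ℕ}

@[simp]
lemma dotCLM_apply (v x : Fin n → ℝ) : dotCLM v x = v ⬝ᵥ x := by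
  simp [dotCLM, dotProduct]

lemma hasFDerivAt_dotProduct (v x : Fin n → ℝ) :
    HasFDerivAt (fun y => v ⬝ᵥ y) (dotCLM v) x := by
  have h : (fun y => v ⬝ᵥ y) = dotCLM v := funext fun y => (dotCLM_apply v y).symm
  rw [h]
  exact (dotCLM v).hasFDerivAt

@[simp]
lemma mulVecCLM_apply (M : Matrix (Fin n) (Fin n) ℝ) (x : Fin n → ℝ) :
    mulVecCLM M x = M *ᵥ x := rfl

lemma clm_eq_dotCLM (l : (Fin n → ℝ) →L[ℝ] ℝ) :
    l = dotCLM (fun i => l (Pi.single i 1)) := by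
  ext x
  rw [dotCLM_apply]
  conv_lhs => rw [pi_eq_sum_univ' x, map_sum]
  refine Finset.sum_congr rfl fun i _ => ?_
  rw [map_smul, smul_eq_mul, mul_comm]

lemma continuous_dotCLM {X : Type*} [TopologicalSpace X] {g : X → Fin n → ℝ}
    (hg : Continuous g) : Continuous fun x => dotCLM (g x) := by
  unfold dotCLM
  fun_prop

lemma hasFDerivAt_pi_mulVecCLM {g : (Fin n → ℝ) → Fin n → ℝ} {M : Matrix (Fin n) (Fin n) ℝ}
    {x : Fin n → ℝ} :
    HasFDerivAt g (mulVecCLM M) x ↔ ∀ i, HasFDerivAt (fun y => g y i) (dotCLM (M i)) x := by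
  rw [hasFDerivAt_pi']
  refine forall_congr' fun i => ?_
  have : (ContinuousLinearMap.proj i).comp (mulVecCLM M) = dotCLM (M i) := by
    ext j
    simp [mulVec]
  rw [this]

lemma hasFDerivAt_dotCLM_gradVec {f : (Fin n → ℝ) → ℝ} (hf : ContDiff ℝ 2 f)
    (x : Fin n → ℝ) : HasFDerivAt f (dotCLM (gradVec f x)) x := by
  have h := (hf.differentiable (by norm_num) x).hasFDerivAt
  rw [clm_eq_dotCLM (fderiv ℝ f x)] at h
  exact h

lemma contDiff_gradVec_apply {f : (Fin n → ℝ) → ℝ} (hf : ContDiff ℝ 2 f) (i : Fin n) :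
    ContDiff ℝ 1 fun x => gradVec f x i := by
  unfold gradVec
  exact (hf.fderiv_right (m := 1) (by norm_num)).clm_apply contDiff_const

lemma contDiff_gradVec {f : (Fin n → ℝ) → ℝ} (hf : ContDiff ℝ 2 f) :
    ContDiff ℝ 1 (gradVec f) :=
  contDiff_pi.2 (contDiff_gradVec_apply hf)

lemma continuous_hessMat_apply {f : (Fin n → ℝ) → ℝ} (hf : ContDiff ℝ 2 f) (i j : Fin n) :
    Continuous fun x => hessMat f x i j :=
  ((contDiff_gradVec_apply hf j).continuous_fderiv (by norm_num)).clm_apply continuous_const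

lemma continuous_hessMat {f : (Fin n → ℝ) → ℝ} (hf : ContDiff ℝ 2 f) :
    Continuous (hessMat f) :=
  continuous_matrix (continuous_hessMat_apply hf)

lemma hessMat_symm {f : (Fin n → ℝ) → ℝ} (hf : ContDiff ℝ 2 f) (x : Fin n → ℝ) (i j : Fin n) :
    hessMat f x i j = hessMat f x j i := by
  have hd : DifferentiableAt ℝ (fderiv ℝ f) x :=
    (hf.fderiv_right (m := 1) (by norm_num)).differentiable (by norm_num) x
  have key : ∀ v w : Fin n → ℝ,
      fderiv ℝ (fun y => fderiv ℝ f y w) x v = fderiv ℝ (fderiv ℝ f) x v w := by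
    intro v w
    rw [fderiv_clm_apply hd (differentiableAt_const _)]
    simp
  have hs := (hf.contDiffAt (x := x)).isSymmSndFDerivAt (by simp)
  simp only [hessMat, Matrix.of_apply, key]
  exact hs _ _

lemma hasFDerivAt_gradVec {f : (Fin n → ℝ) → ℝ} (hf : ContDiff ℝ 2 f) (x : Fin n → ℝ) :
    HasFDerivAt (gradVec f) (mulVecCLM (hessMat f x)) x := by
  rw [hasFDerivAt_pi_mulVecCLM]
  intro i
  have h := ((contDiff_gradVec_apply hf i).differentiable (by norm_num) x).hasFDerivAt
  rw [clm_eq_dotCLM (fderiv ℝ _ x)] at h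
  have hrow : hessMat f x i =
      fun j => fderiv ℝ (fun y => gradVec f y i) x (Pi.single j 1) :=
    funext fun j => hessMat_symm hf x i j
  rwa [hrow]

/-- Derivative of a scalar function along a line. -/
lemma hasDerivAt_line {f : (Fin n → ℝ) → ℝ} {g : (Fin n → ℝ) → Fin n → ℝ}
    (hf : ∀ x, HasFDerivAt f (dotCLM (g x)) x) (x v : Fin n → ℝ) (t : ℝ) :
    HasDerivAt (fun s : ℝ => f (x + s • v)) (g (x + t • v) ⬝ᵥ v) t := by
  have h1 : HasDerivAt (fun s : ℝ => x + s • v) v t := by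
    simpa using ((hasDerivAt_id t).smul_const v).const_add x
  have h2 := (hf (x + t • v)).comp_hasDerivAt t h1
  rw [dotCLM_apply] at h2
  exact h2

/-- Derivative of the directional derivative along a line. -/
lemma hasDerivAt_line_dot {g : (Fin n → ℝ) → Fin n → ℝ}
    {H : (Fin n → ℝ) → Matrix (Fin n) (Fin n) ℝ}
    (hg : ∀ x, HasFDerivAt g (mulVecCLM (H x)) x) (x v : Fin n → ℝ) (t : ℝ) :
    HasDerivAt (fun s : ℝ => g (x + s • v) ⬝ᵥ v) ((H (x + t • v) *ᵥ v) ⬝ᵥ v) t := by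
  have h1 : HasDerivAt (fun s : ℝ => x + s • v) v t := by
    simpa using ((hasDerivAt_id t).smul_const v).const_add x
  have h2 := (hg (x + t • v)).comp_hasDerivAt t h1
  have h3 := (dotCLM v).hasFDerivAt.comp_hasDerivAt t h2
  simp only [mulVecCLM_apply, dotCLM_apply] at h3
  rw [dotProduct_comm]
  refine h3.congr_of_eventuallyEq (Filter.Eventually.of_forall fun s => ?_)
  simp [dotProduct_comm]

end Calculus

section Convexity

variable {n : ℕ} {Φ : (Fin n → ℝ) → ℝ} {T : (Fin n → ℝ) → Fin n → ℝ}
  {B : (Fin n → ℝ) → Matrix (Fin n) (Fin n) ℝ}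

/-- The derivative of a convex function along a line is monotone. -/
lemma ConvexOn.monotone_line_dot (hconv : ConvexOn ℝ Set.univ Φ)
    (hT : ∀ x, HasFDerivAt Φ (dotCLM (T x)) x) (x v : Fin n → ℝ) :
    Monotone fun t : ℝ => T (x + t • v) ⬝ᵥ v := by
  have hd := hasDerivAt_line hT x v
  have hc : ConvexOn ℝ Set.univ fun t : ℝ => Φ (x + t • v) := by
    have h := hconv.comp_affineMap (AffineMap.lineMap x (x + v))
    refine h.congr fun t _ => ?_
    simp [AffineMap.lineMap_apply, add_comm]
  have hm := hc.monotoneOn_deriv fun t _ => (hd t).differentiableAt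
  rw [monotoneOn_univ] at hm
  convert hm using 1
  ext t
  exact (hd t).deriv.symm

/-- A convex function lies above its tangent planes. -/
lemma ConvexOn.tangent_le (hconv : ConvexOn ℝ Set.univ Φ)
    (hT : ∀ x, HasFDerivAt Φ (dotCLM (T x)) x) (x y : Fin n → ℝ) :
    Φ x + T x ⬝ᵥ (y - x) ≤ Φ y := by
  have hd := hasDerivAt_line hT x (y - x)
  have hm := hconv.monotone_line_dot hT x (y - x)
  obtain ⟨c, hc, hc'⟩ := exists_hasDerivAt_eq_slope (fun t : ℝ => Φ (x + t • (y - x)))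
    (fun t => T (x + t • (y - x)) ⬝ᵥ (y - x)) zero_lt_one
    (fun t _ => (hd t).continuousAt.continuousWithinAt) fun t _ => hd t
  have h0 := hm hc.1.le
  simp only [zero_smul, add_zero, one_smul, sub_zero, div_one, add_sub_cancel] at h0 hc'
  linarith

lemma ConvexOn.hess_nonneg (hconv : ConvexOn ℝ Set.univ Φ)
    (hT : ∀ x, HasFDerivAt Φ (dotCLM (T x)) x) (hB : ∀ x, HasFDerivAt T (mulVecCLM (B x)) x)
    (x v : Fin n → ℝ) : 0 ≤ v ⬝ᵥ (B x *ᵥ v) := by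
  have hd := hasDerivAt_line_dot hB x v 0
  have hm := hconv.monotone_line_dot hT x v
  have := hd.deriv ▸ hm.deriv_nonneg (x := 0)
  simpa [dotProduct_comm] using this

lemma posSemidef_hessMat_of_convexOn (hconv : ConvexOn ℝ Set.univ Φ) (hΦ : ContDiff ℝ 2 Φ)
    (x : Fin n → ℝ) : (hessMat Φ x).PosSemidef := by
  refine PosSemidef.of_dotProduct_mulVec_nonneg ?_ fun v => ?_
  · ext i j
    simpa using hessMat_symm hΦ x j i
  · simpa using hconv.hess_nonneg (hasFDerivAt_dotCLM_gradVec hΦ) (hasFDerivAt_gradVec hΦ) x v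

/-- The gradient of a convex function takes its value at a point with nondegenerate Hessian
only once. -/
lemma ConvexOn.grad_eq_imp_eq (hconv : ConvexOn ℝ Set.univ Φ)
    (hT : ∀ x, HasFDerivAt Φ (dotCLM (T x)) x) (hB : ∀ x, HasFDerivAt T (mulVecCLM (B x)) x)
    {x y : Fin n → ℝ} (hx : (B x).PosDef) (hxy : T x = T y) : x = y := by
  have hd := (hasDerivAt_line_dot hB x (y - x) 0).hasDerivWithinAt (s := Set.Icc 0 1)
  have hm := hconv.monotone_line_dot hT x (y - x)
  have hconst : ∀ t ∈ Set.Icc (0 : ℝ) 1,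
      T (x + t • (y - x)) ⬝ᵥ (y - x) = T x ⬝ᵥ (y - x) := by
    intro t ht
    have h0 := hm ht.1
    have h1 := hm ht.2
    simp only [zero_smul, add_zero, one_smul, add_sub_cancel] at h0 h1
    rw [← hxy] at h1
    exact le_antisymm h1 h0
  have hd' : HasDerivWithinAt (fun t : ℝ => T (x + t • (y - x)) ⬝ᵥ (y - x)) 0
      (Set.Icc 0 1) 0 :=
    (hasDerivWithinAt_const (0 : ℝ) _ (T x ⬝ᵥ (y - x))).congr hconst (by simp)
  have hu := (uniqueDiffOn_Icc (zero_lt_one' ℝ) 0 (by simp)).eq_deriv _ hd hd'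
  by_contra hne
  have hpos := hx.dotProduct_mulVec_pos (sub_ne_zero.2 (Ne.symm hne))
  simp only [zero_smul, add_zero, star_trivial] at hu hpos
  rw [dotProduct_comm] at hu
  exact hpos.ne' hu

/-- If the gradient of a convex function has dense range, it is surjective. -/
lemma ConvexOn.surjective_of_denseRange (hconv : ConvexOn ℝ Set.univ Φ)
    (hT : ∀ x, HasFDerivAt Φ (dotCLM (T x)) x) (hdense : DenseRange T) :
    Function.Surjective T := by
  intro y
  rcases Nat.eq_zero_or_pos n with hn | hn
  · subst hn
    exact ⟨0, Subsingleton.elim _ _⟩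
  have hδ : (0 : ℝ) < 1 / (2 * (n + 1)) := by positivity
  have hpick : ∀ z : Fin n → ℝ, ∃ x, dist z (T x) < 1 / (2 * (n + 1) : ℝ) := fun z =>
    hdense.exists_dist_lt z hδ
  choose pt hpt using hpick
  let C : (Fin n → ℝ) → ℝ := fun z => T (pt z) ⬝ᵥ pt z - Φ (pt z)
  have hlow : ∀ x z : Fin n → ℝ, (z - y) ⬝ᵥ x - ‖x‖ / 2 - C z ≤ Φ x - y ⬝ᵥ x := by
    intro x z
    have h1 := hconv.tangent_le hT (pt z) x
    have h2 : (z - T (pt z)) ⬝ᵥ x ≤ ‖x‖ / 2 := by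
      have h3 : ∀ i, (z - T (pt z)) i * x i ≤ 1 / (2 * (n + 1) : ℝ) * ‖x‖ := by
        intro i
        refine (le_abs_self _).trans ?_
        rw [abs_mul]
        refine mul_le_mul ?_ (norm_le_pi_norm x i) (abs_nonneg _) hδ.le
        have h4 := norm_le_pi_norm (z - T (pt z)) i
        rw [← dist_eq_norm] at h4
        exact h4.trans (hpt z).le
      refine (Finset.sum_le_sum fun i _ => h3 i).trans ?_
      simp only [Finset.sum_const, Finset.card_univ, Fintype.card_fin, nsmul_eq_mul]
      have h5 : (n : ℝ) * (1 / (2 * (n + 1) : ℝ) * ‖x‖) = (n / (n + 1) : ℝ) * (‖x‖ / 2) := by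
        field_simp
      rw [h5]
      have h6 : (n / (n + 1) : ℝ) ≤ 1 := by
        rw [div_le_one (by positivity)]
        linarith
      exact mul_le_of_le_one_left (by positivity) h6
    simp only [C, sub_dotProduct, dotProduct_sub] at *
    linarith
  let C' : ℝ := |C 0| + ∑ i, (|C (y + Pi.single i 1)| + |C (y - Pi.single i 1)|)
  have hcoer : ∀ x : Fin n → ℝ, ‖x‖ / 2 - C' ≤ Φ x - y ⬝ᵥ x := by
    intro x
    have : Nonempty (Fin n) := ⟨⟨0, hn⟩⟩
    obtain ⟨i, hi⟩ := Finite.exists_max fun i => |x i|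
    have hxi : ‖x‖ ≤ |x i| := (pi_norm_le_iff_of_nonneg (abs_nonneg _)).2 hi
    have hCi : |C (y + Pi.single i 1)| + |C (y - Pi.single i 1)| ≤ C' := by
      have := Finset.single_le_sum
        (f := fun i => |C (y + Pi.single i 1)| + |C (y - Pi.single i 1)|)
        (fun j _ => by positivity) (Finset.mem_univ i)
      have h0 := abs_nonneg (C 0)
      simp only [C'] at *
      linarith
    have h1 := hlow x (y + Pi.single i 1)
    have h2 := hlow x (y - Pi.single i 1)
    have h3 := le_abs_self (C (y + Pi.single i 1))
    have h4 := le_abs_self (C (y - Pi.single i 1))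
    have h5 := abs_nonneg (C (y + Pi.single i 1))
    have h6 := abs_nonneg (C (y - Pi.single i 1))
    simp only [add_sub_cancel_left, sub_sub_cancel_left, single_dotProduct, neg_dotProduct,
      one_mul] at h1 h2
    rcases abs_cases (x i) with ⟨h, _⟩ | ⟨h, _⟩ <;> linarith
  have hcont : Continuous fun x => Φ x - y ⬝ᵥ x :=
    (continuous_iff_continuousAt.2 fun x => (hT x).continuousAt).sub
      (continuous_iff_continuousAt.2 fun x => (hasFDerivAt_dotProduct y x).continuousAt)
  have hlim : Filter.Tendsto (fun x => Φ x - y ⬝ᵥ x) (Filter.cocompact _) Filter.atTop := by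
    refine Filter.tendsto_atTop_mono hcoer ?_
    exact Filter.tendsto_atTop_add_const_right _ _
      ((tendsto_norm_cocompact_atTop (E := Fin n → ℝ)).atTop_div_const (by norm_num))
  obtain ⟨x, hx⟩ := hcont.exists_forall_le hlim
  have hmin : IsLocalMin (fun x => Φ x - y ⬝ᵥ x) x := Filter.Eventually.of_forall hx
  have hder : HasFDerivAt (fun x => Φ x - y ⬝ᵥ x) (dotCLM (T x) - dotCLM y) x :=
    (hT x).sub (hasFDerivAt_dotProduct y x)
  have hz := hmin.hasFDerivAt_eq_zero hder
  refine ⟨x, funext fun i => ?_⟩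
  have := DFunLike.congr_fun hz (Pi.single i 1)
  simpa [sub_eq_zero] using this

end Convexity

/-- The measure with density `e^{-V}` with respect to Lebesgue measure. -/
abbrev gibbs {n : ℕ} (V : (Fin n → ℝ) → ℝ) : Measure (Fin n → ℝ) :=
  volume.withDensity fun x => ENNReal.ofReal (Real.exp (-V x))

section MongeAmpere

variable {n : ℕ} {V W Φ : (Fin n → ℝ) → ℝ} {T : (Fin n → ℝ) → Fin n → ℝ}
  {B : (Fin n → ℝ) → Matrix (Fin n) (Fin n) ℝ}

lemma measurable_gibbs_density (hV : Continuous V) :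
    Measurable fun x => ENNReal.ofReal (Real.exp (-V x)) := by
  have := hV.measurable
  fun_prop

lemma volume_absolutelyContinuous_gibbs (hV : Continuous V) : volume ≪ gibbs V :=
  withDensity_absolutelyContinuous' (measurable_gibbs_density hV).aemeasurable
    (Filter.Eventually.of_forall fun x => by simp [Real.exp_pos])

lemma det_mulVecCLM (M : Matrix (Fin n) (Fin n) ℝ) : (mulVecCLM M).det = M.det := by
  simp only [ContinuousLinearMap.det, mulVecCLM, LinearMap.coe_toContinuousLinearMap]
  exact LinearMap.det_toLin' M

/-- A `C²` convex function whose gradient transports `e^{-V}` to `e^{-W}` solves the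
Monge–Ampère equation. -/
lemma monge_ampere (hV : Continuous V) (hW : Continuous W)
    (hconv : ConvexOn ℝ Set.univ Φ) (hT : ∀ x, HasFDerivAt Φ (dotCLM (T x)) x)
    (hB : ∀ x, HasFDerivAt T (mulVecCLM (B x)) x) (hBc : Continuous B)
    (hBpsd : ∀ x, (B x).PosSemidef) (hmap : Measure.map T (gibbs V) = gibbs W)
    (x : Fin n → ℝ) : (B x).det * Real.exp (-W (T x)) = Real.exp (-V x) := by
  have hTc : Continuous T := continuous_iff_continuousAt.2 fun x => (hB x).continuousAt
  have hdet : Continuous fun x => (B x).det := hBc.matrix_det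
  have hnull : volume {x | (B x).det = 0} = 0 := by
    have h1 : volume (T '' {x | (B x).det = 0}) = 0 :=
      addHaar_image_eq_zero_of_det_fderivWithin_eq_zero volume
        (fun x _ => (hB x).hasFDerivWithinAt) fun x hx => by rw [det_mulVecCLM]; exact hx
    have h2 : gibbs W (T '' {x | (B x).det = 0}) = 0 :=
      withDensity_absolutelyContinuous _ _ h1
    have hmp : MeasurePreserving T (gibbs V) (gibbs W) := ⟨hTc.measurable, hmap⟩
    have h3 := hmp.quasiMeasurePreserving.preimage_null h2
    exact volume_absolutelyContinuous_gibbs hV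
      (measure_mono_null (Set.subset_preimage_image T _) h3)
  have hpd : ∀ x, (B x).det ≠ 0 → (B x).PosDef := fun x hx =>
    (hBpsd x).posDef_iff_det_ne_zero.2 hx
  have hUm : MeasurableSet {x | (B x).det ≠ 0} :=
    (isOpen_ne_fun hdet continuous_const).measurableSet
  have hmeas : Measurable fun x =>
      ENNReal.ofReal |(mulVecCLM (B x)).det| * ENNReal.ofReal (Real.exp (-W (T x))) := by
    simp only [det_mulVecCLM]
    have h1 := hdet.measurable
    have h2 := (hW.comp hTc).measurable
    fun_prop
  have hae : (fun x => ENNReal.ofReal |(mulVecCLM (B x)).det| *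
      ENNReal.ofReal (Real.exp (-W (T x)))) =ᵐ[volume]
      fun x => ENNReal.ofReal (Real.exp (-V x)) := by
    refine ae_eq_of_forall_setLIntegral_eq_of_sigmaFinite hmeas
      (measurable_gibbs_density hV) fun s hs _ => ?_
    have hcompl : volume ({x | (B x).det ≠ 0}ᶜ) = 0 := by
      rw [← hnull]
      congr 1
      ext x
      simp
    have hres : (volume.restrict s : Measure (Fin n → ℝ)) =
        volume.restrict (s ∩ {x | (B x).det ≠ 0}) := by
      refine Measure.restrict_congr_set ?_
      have : ({x | (B x).det ≠ 0} : Set (Fin n → ℝ)) =ᵐ[volume] Set.univ :=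
        ae_eq_univ.2 hcompl
      simpa using ((ae_eq_refl s).inter this).symm
    rw [hres]
    set s' := s ∩ {x | (B x).det ≠ 0} with hs'
    have hs'm : MeasurableSet s' := hs.inter hUm
    have hinj : ∀ x ∈ s', ∀ y, T x = T y → x = y := fun x hx y hxy =>
      hconv.grad_eq_imp_eq hT hB (hpd x hx.2) hxy
    have hinjOn : Set.InjOn T s' := fun x hx y _ hxy => hinj x hx y hxy
    have himg : MeasurableSet (T '' s') :=
      hs'm.image_of_continuousOn_injOn hTc.continuousOn hinjOn
    have hpre : T ⁻¹' (T '' s') = s' := by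
      refine Set.Subset.antisymm ?_ (Set.subset_preimage_image T s')
      rintro y ⟨x, hx, hxy⟩
      rwa [← hinj x hx y hxy]
    rw [← lintegral_image_eq_lintegral_abs_det_fderiv_mul volume hs'm
      (fun x _ => (hB x).hasFDerivWithinAt) hinjOn
      (fun y => ENNReal.ofReal (Real.exp (-W y))), ← withDensity_apply _ himg,
      ← withDensity_apply _ hs'm]
    change gibbs W _ = gibbs V _
    rw [← hmap, Measure.map_apply hTc.measurable himg, hpre]
  have hreal : (fun x => (B x).det * Real.exp (-W (T x))) =ᵐ[volume]
      fun x => Real.exp (-V x) := by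
    filter_upwards [hae] with x hx
    rw [det_mulVecCLM, ← ENNReal.ofReal_mul (abs_nonneg _),
      ENNReal.ofReal_eq_ofReal_iff (by positivity) (by positivity),
      abs_of_nonneg (hBpsd x).det_nonneg] at hx
    exact hx
  have := (Continuous.ae_eq_iff_eq volume (hdet.mul (Real.continuous_exp.comp
    (hW.comp hTc).neg)) (Real.continuous_exp.comp hV.neg)).1 hreal
  exact congrFun this x

lemma denseRange_of_map_gibbs (hW : Continuous W) (hTc : Continuous T)
    (hmap : Measure.map T (gibbs V) = gibbs W) : DenseRange T := by
  rw [DenseRange, dense_iff_inter_open]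
  intro O hO hne
  by_contra hemp
  have hpre : T ⁻¹' O = ∅ := by
    ext x
    simp only [Set.mem_preimage, Set.mem_empty_iff_false, iff_false]
    exact fun hx => hemp ⟨T x, hx, x, rfl⟩
  have h0 : gibbs W O = 0 := by
    rw [← hmap, Measure.map_apply hTc.measurable hO.measurableSet, hpre, measure_empty]
  exact hO.measure_ne_zero volume hne (volume_absolutelyContinuous_gibbs hW h0)

/-- The continuous linear equivalence attached to a matrix with nonzero determinant. -/
def mulVecCLE (M : Matrix (Fin n) (Fin n) ℝ) (hM : M.det ≠ 0) :
    (Fin n → ℝ) ≃L[ℝ] (Fin n → ℝ) :=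
  ContinuousLinearEquiv.equivOfInverse (mulVecCLM M) (mulVecCLM M⁻¹)
    (fun x => by simp [Matrix.nonsing_inv_mul M hM.isUnit])
    (fun x => by simp [Matrix.mul_nonsing_inv M hM.isUnit])

/-- The transport map has a differentiable inverse. -/
lemma exists_inverse (hT : ContDiff ℝ 1 T) (hB : ∀ x, HasFDerivAt T (mulVecCLM (B x)) x)
    (hdet : ∀ x, (B x).det ≠ 0) (hbij : Function.Bijective T) :
    ∃ e : (Fin n → ℝ) ≃ₜ (Fin n → ℝ), (∀ x, e x = T x) ∧
      ∀ p, HasFDerivAt e.symm (mulVecCLM (B (e.symm p))⁻¹) p := by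
  have hstrict : ∀ x, HasStrictFDerivAt T
      ((mulVecCLE (B x) (hdet x) : (Fin n → ℝ) ≃L[ℝ] (Fin n → ℝ)) :
        (Fin n → ℝ) →L[ℝ] (Fin n → ℝ)) x := fun x =>
    hT.contDiffAt.hasStrictFDerivAt' (hB x) (by norm_num)
  have hopen : IsOpenMap T := isOpenMap_of_hasStrictFDerivAt_equiv hstrict
  refine ⟨(Equiv.ofBijective T hbij).toHomeomorphOfContinuousOpen hT.continuous hopen,
    fun x => rfl, fun p => ?_⟩
  set e := (Equiv.ofBijective T hbij).toHomeomorphOfContinuousOpen hT.continuous hopen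
  have h := HasFDerivAt.of_local_left_inverse (f := T) (g := e.symm)
    (f' := mulVecCLE (B (e.symm p)) (hdet _)) e.symm.continuous.continuousAt
    (hB (e.symm p)) (Filter.Eventually.of_forall fun y => e.apply_symm_apply y)
  exact h

end MongeAmpere

section Kernel

variable {n : ℕ}

/-- A pair of measures on the unit ball, the first of which is a probability measure, linked by
the integration by parts formula `∫ y i * f ∂ρ = ∫ ∂ᵢ f ∂σ`. -/
structure IsSteinPair {n : ℕ} (ρ σ : Measure (Fin n → ℝ)) : Prop where
  prob : IsProbabilityMeasure ρ
  finite : IsFiniteMeasure σ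
  pos : 0 < σ.real Set.univ
  restrict_left : ρ.restrict (Metric.closedBall 0 1) = ρ
  restrict_right : σ.restrict (Metric.closedBall 0 1) = σ
  stein : ∀ (f : (Fin n → ℝ) → ℝ) (g : (Fin n → ℝ) → Fin n → ℝ),
    (∀ y, HasFDerivAt f (dotCLM (g y)) y) → Continuous g → ∀ i,
    ∫ y, y i * f y ∂ρ = ∫ y, g y i ∂σ

/-- The function `max 0 (1 - |y|²)`. -/
def bumpFun (y : Fin n → ℝ) : ℝ := max 0 (1 - y ⬝ᵥ y)

lemma continuous_bumpFun : Continuous (bumpFun (n := n)) := by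
  unfold bumpFun; fun_prop

lemma bumpFun_nonneg (y : Fin n → ℝ) : 0 ≤ bumpFun y := le_max_left _ _

lemma bumpFun_eq_zero {y : Fin n → ℝ} (hy : y ∉ Metric.closedBall (0 : Fin n → ℝ) 1) :
    bumpFun y = 0 := by
  rw [mem_closedBall_zero_iff, pi_norm_le_iff_of_nonneg zero_le_one] at hy
  push Not at hy
  obtain ⟨i, hi⟩ := hy
  have h1 : y i * y i ≤ y ⬝ᵥ y :=
    Finset.single_le_sum (f := fun i => y i * y i) (fun i _ => mul_self_nonneg _)
      (Finset.mem_univ i)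
  have h2 : 1 < y i * y i := by
    rw [← abs_mul_abs_self]
    rw [Real.norm_eq_abs] at hi
    nlinarith
  exact max_eq_left (by linarith)

lemma hasCompactSupport_bumpFun : HasCompactSupport (bumpFun (n := n)) :=
  HasCompactSupport.intro (isCompact_closedBall 0 1) fun _ hy => bumpFun_eq_zero hy

lemma hasDerivAt_max_zero_sq (t : ℝ) :
    HasDerivAt (fun s : ℝ => max 0 s ^ 2) (2 * max 0 t) t := by
  rcases lt_trichotomy t 0 with ht | ht | ht
  · rw [max_eq_left ht.le, mul_zero]
    refine (hasDerivAt_const t (0 : ℝ)).congr_of_eventuallyEq ?_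
    filter_upwards [gt_mem_nhds ht] with s hs
    simp [max_eq_left (show s ≤ 0 from le_of_lt hs)]
  · subst ht
    rw [hasDerivAt_iff_isLittleO]
    simp only [sub_zero, max_self, mul_zero, smul_zero, ne_eq, OfNat.ofNat_ne_zero,
      not_false_eq_true, zero_pow]
    have h1 : (fun s : ℝ => max 0 s ^ 2) =O[nhds 0] fun s : ℝ => s ^ 2 := by
      refine Asymptotics.IsBigO.of_bound 1 (Filter.Eventually.of_forall fun s => ?_)
      rw [one_mul, Real.norm_eq_abs, Real.norm_eq_abs, abs_of_nonneg (sq_nonneg _),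
        abs_of_nonneg (sq_nonneg _), sq_le_sq, abs_of_nonneg (le_max_left _ _)]
      exact max_le (abs_nonneg _) (le_abs_self _)
    refine h1.trans_isLittleO ?_
    simpa using Asymptotics.isLittleO_pow_id (𝕜 := ℝ) (n := 2) (by norm_num)
  · rw [max_eq_right ht.le]
    have h := hasDerivAt_pow 2 t
    simp only [Nat.cast_ofNat, Nat.add_one_sub_one, pow_one] at h
    refine h.congr_of_eventuallyEq ?_
    filter_upwards [lt_mem_nhds ht] with s hs
    simp [max_eq_right (show 0 ≤ s from le_of_lt hs)]

lemma hasFDerivAt_dotProduct_self (y : Fin n → ℝ) :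
    HasFDerivAt (fun z : Fin n → ℝ => z ⬝ᵥ z) (dotCLM ((2 : ℝ) • y)) y := by
  have h : HasFDerivAt (fun z : Fin n → ℝ => ∑ i, z i * z i)
      (∑ i, (y i • ContinuousLinearMap.proj (R := ℝ) (φ := fun _ : Fin n => ℝ) i
        + y i • ContinuousLinearMap.proj (R := ℝ) (φ := fun _ : Fin n => ℝ) i)) y :=
    HasFDerivAt.fun_sum fun i _ => (hasFDerivAt_apply i y).mul (hasFDerivAt_apply i y)
  have hL : dotCLM ((2 : ℝ) • y) =
      ∑ i, (y i • ContinuousLinearMap.proj (R := ℝ) (φ := fun _ : Fin n => ℝ) i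
        + y i • ContinuousLinearMap.proj (R := ℝ) (φ := fun _ : Fin n => ℝ) i) := by
    unfold dotCLM
    refine Finset.sum_congr rfl fun i _ => ?_
    rw [Pi.smul_apply, smul_eq_mul, two_mul, add_smul]
  rw [hL]
  exact h

lemma hasFDerivAt_bumpFun_sq (y : Fin n → ℝ) :
    HasFDerivAt (fun z : Fin n → ℝ => bumpFun z ^ 2 / 4) (dotCLM (-(bumpFun y) • y)) y := by
  have h1 : HasFDerivAt (fun z : Fin n → ℝ => 1 - z ⬝ᵥ z) (-(dotCLM ((2 : ℝ) • y))) y :=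
    (hasFDerivAt_dotProduct_self y).const_sub 1
  have h2 := ((hasDerivAt_max_zero_sq (1 - y ⬝ᵥ y)).div_const 4).comp_hasFDerivAt y h1
  have hL : dotCLM (-(bumpFun y) • y) =
      (2 * max 0 (1 - y ⬝ᵥ y) / 4) • -(dotCLM ((2 : ℝ) • y)) := by
    ext v
    simp [bumpFun]
    ring
  rw [hL]
  exact h2

lemma integral_bumpFun_pos : 0 < ∫ y : Fin n → ℝ, bumpFun y :=
  continuous_bumpFun.integral_pos_of_hasCompactSupport_nonneg_nonzero hasCompactSupport_bumpFun
    bumpFun_nonneg (x := 0) (by simp [bumpFun])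

lemma restrict_withDensity_of_eq_zero {X : Type*} [MeasurableSpace X] {μ : Measure X}
    {s : Set X} (hs : MeasurableSet s) {f : X → ℝ≥0∞} (hf : ∀ x ∉ s, f x = 0) :
    (μ.withDensity f).restrict s = μ.withDensity f := by
  refine Measure.restrict_eq_self_of_ae_mem ?_
  rw [ae_iff, show {a | a ∉ s} = sᶜ from rfl, withDensity_apply _ hs.compl]
  rw [setLIntegral_congr_fun hs.compl (g := fun _ => 0) fun x hx => hf x hx]
  simp

lemma integral_withDensity_ofReal {X : Type*} [MeasurableSpace X] {μ : Measure X}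
    {r : X → ℝ} (hr : Measurable r) (hr0 : ∀ x, 0 ≤ r x) (f : X → ℝ) :
    ∫ x, f x ∂(μ.withDensity fun x => ENNReal.ofReal (r x)) = ∫ x, r x * f x ∂μ := by
  rw [integral_withDensity_eq_integral_toReal_smul hr.ennreal_ofReal
    (Filter.Eventually.of_forall fun x => ENNReal.ofReal_lt_top)]
  simp [ENNReal.toReal_ofReal (hr0 _)]

lemma exists_isSteinPair (n : ℕ) : ∃ ρ σ : Measure (Fin n → ℝ), IsSteinPair ρ σ := by
  set m := ∫ y : Fin n → ℝ, bumpFun y with hm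
  have hm0 : 0 < m := integral_bumpFun_pos
  have hc1 : Continuous fun y : Fin n → ℝ => bumpFun y / m := continuous_bumpFun.div_const m
  have hc2 : Continuous fun y : Fin n → ℝ => bumpFun y ^ 2 / 4 / m :=
    ((continuous_bumpFun.pow 2).div_const 4).div_const m
  have hn1 : ∀ y : Fin n → ℝ, 0 ≤ bumpFun y / m := fun y => div_nonneg (bumpFun_nonneg y) hm0.le
  have hn2 : ∀ y : Fin n → ℝ, 0 ≤ bumpFun y ^ 2 / 4 / m := fun y => by positivity
  have hs1 : HasCompactSupport fun y : Fin n → ℝ => bumpFun y / m :=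
    HasCompactSupport.intro (isCompact_closedBall 0 1) fun y hy => by simp [bumpFun_eq_zero hy]
  have hs2 : HasCompactSupport fun y : Fin n → ℝ => bumpFun y ^ 2 / 4 / m :=
    HasCompactSupport.intro (isCompact_closedBall 0 1) fun y hy => by simp [bumpFun_eq_zero hy]
  have hi1 := hc1.integrable_of_hasCompactSupport (μ := volume) hs1
  have hi2 := hc2.integrable_of_hasCompactSupport (μ := volume) hs2
  refine ⟨volume.withDensity fun y => ENNReal.ofReal (bumpFun y / m),
    volume.withDensity fun y => ENNReal.ofReal (bumpFun y ^ 2 / 4 / m), ?_, ?_, ?_, ?_, ?_, ?_⟩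
  · refine ⟨?_⟩
    rw [withDensity_apply _ MeasurableSet.univ, Measure.restrict_univ, ← ofReal_integral_eq_lintegral_ofReal hi1 (Filter.Eventually.of_forall hn1),
      integral_div, div_self hm0.ne', ENNReal.ofReal_one]
  · exact isFiniteMeasure_withDensity_ofReal hi2.2
  · have h := integral_withDensity_ofReal (μ := volume) hc2.measurable hn2 fun _ => 1
    simp only [integral_const, smul_eq_mul, mul_one] at h
    rw [h]
    exact hc2.integral_pos_of_hasCompactSupport_nonneg_nonzero hs2 hn2 (x := 0)
      (by simp [bumpFun, hm0.ne'])
  · exact restrict_withDensity_of_eq_zero Metric.isClosed_closedBall.measurableSet fun y hy => by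
      simp [bumpFun_eq_zero hy]
  · exact restrict_withDensity_of_eq_zero Metric.isClosed_closedBall.measurableSet fun y hy => by
      simp [bumpFun_eq_zero hy]
  · intro f g hf hg i
    rw [integral_withDensity_ofReal hc1.measurable hn1,
      integral_withDensity_ofReal hc2.measurable hn2]
    have hfc : Continuous f := continuous_iff_continuousAt.2 fun y => (hf y).continuousAt
    have hd2 : ∀ y : Fin n → ℝ, HasFDerivAt (fun z : Fin n → ℝ => bumpFun z ^ 2 / 4 / m)
        (m⁻¹ • dotCLM (-(bumpFun y) • y)) y := fun y => by
      simpa [div_eq_inv_mul] using (hasFDerivAt_bumpFun_sq y).const_mul m⁻¹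
    have hgi : ∀ y, fderiv ℝ f y (Pi.single i 1) = g y i := fun y => by
      rw [(hf y).fderiv]; simp
    have hri : ∀ y : Fin n → ℝ, fderiv ℝ (fun z : Fin n → ℝ => bumpFun z ^ 2 / 4 / m) y
        (Pi.single i 1) = - (bumpFun y / m * y i) := fun y => by
      rw [(hd2 y).fderiv]; simp; ring
    have key := integral_mul_fderiv_eq_neg_fderiv_mul_of_integrable (μ := volume)
      (f := fun y : Fin n → ℝ => bumpFun y ^ 2 / 4 / m) (g := f) (v := Pi.single i 1)
      ?_ ?_ ?_ (fun y _ => (hd2 y).differentiableAt) (fun y _ => (hf y).differentiableAt)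
    · simp only [hgi, hri] at key
      rw [key, ← integral_neg]
      congr 1
      ext y
      ring
    · simp only [hri]
      exact Continuous.integrable_of_hasCompactSupport (by fun_prop) 
        (HasCompactSupport.intro (isCompact_closedBall 0 1) fun y hy => by
          simp [bumpFun_eq_zero hy])
    · simp only [hgi]
      exact Continuous.integrable_of_hasCompactSupport (by fun_prop) hs2.mul_right
    · exact Continuous.integrable_of_hasCompactSupport (by fun_prop) hs2.mul_right

end Kernel

namespace IsSteinPair

variable {n : ℕ} {ρ σ : Measure (Fin n → ℝ)}

lemma integrable_left {F : Type*} [NormedAddCommGroup F] (h : IsSteinPair ρ σ)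
    {f : (Fin n → ℝ) → F} (hf : Continuous f) : Integrable f ρ := by
  have := h.prob
  rw [← h.restrict_left]
  exact hf.continuousOn.integrableOn_compact (isCompact_closedBall 0 1)

lemma integrable_right {F : Type*} [NormedAddCommGroup F] (h : IsSteinPair ρ σ)
    {f : (Fin n → ℝ) → F} (hf : Continuous f) : Integrable f σ := by
  have := h.finite
  rw [← h.restrict_right]
  exact hf.continuousOn.integrableOn_compact (isCompact_closedBall 0 1)

lemma ae_left (h : IsSteinPair ρ σ) : ∀ᵐ y ∂ρ, y ∈ Metric.closedBall (0 : Fin n → ℝ) 1 := by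
  rw [← h.restrict_left]
  exact ae_restrict_mem Metric.isClosed_closedBall.measurableSet

lemma ae_right (h : IsSteinPair ρ σ) : ∀ᵐ y ∂σ, y ∈ Metric.closedBall (0 : Fin n → ℝ) 1 := by
  rw [← h.restrict_right]
  exact ae_restrict_mem Metric.isClosed_closedBall.measurableSet

lemma continuous_integral {X F : Type*} [TopologicalSpace X] [FirstCountableTopology X]
    [LocallyCompactSpace X] [NormedAddCommGroup F] [NormedSpace ℝ F] (h : IsSteinPair ρ σ)
    {f : X → (Fin n → ℝ) → F} (hf : Continuous (Function.uncurry f)) :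
    Continuous fun x => ∫ y, f x y ∂ρ := by
  have := h.prob
  rw [← h.restrict_left]
  exact continuous_parametric_integral_of_continuous hf (isCompact_closedBall 0 1)

lemma hasFDerivAt_integral {X : Type*} [NormedAddCommGroup X] [NormedSpace ℝ X] [ProperSpace X]
    (h : IsSteinPair ρ σ) {F : X → (Fin n → ℝ) → ℝ} {F' : X → (Fin n → ℝ) → X →L[ℝ] ℝ}
    (hF : ∀ x, Continuous (F x)) (hF' : Continuous (Function.uncurry F'))
    (hd : ∀ x y, HasFDerivAt (fun x => F x y) (F' x y) x) (x : X) :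
    HasFDerivAt (fun x => ∫ y, F x y ∂ρ) (∫ y, F' x y ∂ρ) x := by
  have := h.prob
  obtain ⟨C, hC⟩ := ((isCompact_closedBall x 1).prod
    (isCompact_closedBall (0 : Fin n → ℝ) 1)).exists_bound_of_continuousOn hF'.continuousOn
  refine hasFDerivAt_integral_of_dominated_of_fderiv_le (bound := fun _ => C)
    (Metric.closedBall_mem_nhds x one_pos)
    (Filter.Eventually.of_forall fun z => (h.integrable_left (hF z)).aestronglyMeasurable)
    (h.integrable_left (hF x))
    (h.integrable_left (f := F' x) (by fun_prop)).aestronglyMeasurable ?_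
    (integrable_const C) (Filter.Eventually.of_forall fun y z _ => hd z y)
  filter_upwards [h.ae_left] with y hy z hz
  exact hC (z, y) ⟨hz, hy⟩

lemma integral_dotCLM (h : IsSteinPair ρ σ) {g : (Fin n → ℝ) → Fin n → ℝ} (hg : Continuous g) :
    ∫ y, dotCLM (g y) ∂ρ = dotCLM fun i => ∫ y, g y i ∂ρ := by
  ext v
  rw [ContinuousLinearMap.integral_apply (h.integrable_left (continuous_dotCLM hg))]
  simp only [dotCLM_apply, dotProduct]
  rw [integral_finsetSum _ fun i _ => h.integrable_left (by fun_prop)]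
  simp_rw [integral_mul_const]

/-- The gradient of an average of translates. -/
lemma hasFDerivAt_average (h : IsSteinPair ρ σ) {f : (Fin n → ℝ) → ℝ}
    {g : (Fin n → ℝ) → Fin n → ℝ} (hf : ∀ x, HasFDerivAt f (dotCLM (g x)) x)
    (hg : Continuous g) (Λ : Matrix (Fin n) (Fin n) ℝ) (x : Fin n → ℝ) :
    HasFDerivAt (fun x => ∫ y, f (x + Λ *ᵥ y) ∂ρ)
      (dotCLM fun i => ∫ y, g (x + Λ *ᵥ y) i ∂ρ) x := by
  have hfc : Continuous f := continuous_iff_continuousAt.2 fun y => (hf y).continuousAt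
  rw [← h.integral_dotCLM (by fun_prop)]
  refine h.hasFDerivAt_integral (F := fun x y => f (x + Λ *ᵥ y))
    (F' := fun x y => dotCLM (g (x + Λ *ᵥ y))) (fun x => by fun_prop)
    (continuous_dotCLM (by fun_prop)) (fun x y => ?_) x
  have h1 := (hf (x + Λ *ᵥ y)).comp x ((hasFDerivAt_id x).add_const (Λ *ᵥ y))
  rwa [ContinuousLinearMap.comp_id] at h1

lemma hasFDerivAt_average_vec (h : IsSteinPair ρ σ) {g : (Fin n → ℝ) → Fin n → ℝ}
    {H : (Fin n → ℝ) → Matrix (Fin n) (Fin n) ℝ}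
    (hg : ∀ x, HasFDerivAt g (mulVecCLM (H x)) x) (hH : Continuous H)
    (Λ : Matrix (Fin n) (Fin n) ℝ) (x : Fin n → ℝ) :
    HasFDerivAt (fun x i => ∫ y, g (x + Λ *ᵥ y) i ∂ρ)
      (mulVecCLM (Matrix.of fun i j => ∫ y, H (x + Λ *ᵥ y) i j ∂ρ)) x := by
  rw [hasFDerivAt_pi_mulVecCLM]
  intro i
  exact h.hasFDerivAt_average (f := fun x => g x i) (g := fun x => H x i)
    (fun x => hasFDerivAt_pi_mulVecCLM.1 (hg x) i) (continuous_pi fun j => hH.matrix_elem i j) Λ x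

lemma integral_apply (h : IsSteinPair ρ σ) (i : Fin n) : ∫ y, y i ∂ρ = 0 := by
  have := h.stein (fun _ => 1) (fun _ => 0)
    (fun y => by
      convert hasFDerivAt_const (1 : ℝ) y
      ext v
      simp) continuous_const i
  simpa using this

lemma integral_apply_mul_apply (h : IsSteinPair ρ σ) (i j : Fin n) :
    ∫ y, y i * y j ∂ρ = if i = j then σ.real Set.univ else 0 := by
  have := h.stein (fun y => Pi.single j 1 ⬝ᵥ y) (fun _ => Pi.single j 1)
    (fun y => hasFDerivAt_dotProduct _ y) continuous_const i
  simpa [Pi.single_apply] using this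

variable {F : (Fin n → ℝ) → ℝ} {gF : (Fin n → ℝ) → Fin n → ℝ}
  {HF : (Fin n → ℝ) → Matrix (Fin n) (Fin n) ℝ} {β : ℝ}

lemma integral_dotProduct_self_le (h : IsSteinPair ρ σ)
    (hg : ∀ y, HasFDerivAt gF (mulVecCLM (HF y)) y) (hH : Continuous HF)
    (hβ : ∀ y ∈ Metric.closedBall (0 : Fin n → ℝ) 1, (HF y).trace ≤ β) :
    ∫ y, gF y ⬝ᵥ y ∂ρ ≤ σ.real Set.univ * β := by
  have := h.finite
  have hgc : Continuous gF := continuous_iff_continuousAt.2 fun y => (hg y).continuousAt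
  have h1 : ∫ y, gF y ⬝ᵥ y ∂ρ = ∫ y, (HF y).trace ∂σ := by
    simp only [dotProduct, Matrix.trace, Matrix.diag]
    rw [integral_finsetSum _ fun i _ => h.integrable_left (by fun_prop),
      integral_finsetSum _ fun i _ => h.integrable_right (hH.matrix_elem i i)]
    refine Finset.sum_congr rfl fun i _ => ?_
    have := h.stein (fun y => gF y i) (fun y => HF y i)
      (fun y => hasFDerivAt_pi_mulVecCLM.1 (hg y) i) (continuous_pi fun j => hH.matrix_elem i j) i
    rw [← this]
    simp_rw [mul_comm]
  rw [h1]
  have h2 := integral_mono_ae (h.integrable_right hH.matrix_trace) (integrable_const β)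
    (h.ae_right.mono hβ)
  simpa using h2

lemma integral_sub_le (h : IsSteinPair ρ σ)
    (hF : ∀ y, HasFDerivAt F (dotCLM (gF y)) y)
    (hg : ∀ y, HasFDerivAt gF (mulVecCLM (HF y)) y) (hH : Continuous HF)
    (hβ : ∀ y ∈ Metric.closedBall (0 : Fin n → ℝ) 1, (HF y).trace ≤ β) :
    ∫ y, F y ∂ρ - F 0 ≤ σ.real Set.univ * β / 2 := by
  have := h.prob
  have hgc : Continuous gF := continuous_iff_continuousAt.2 fun y => (hg y).continuousAt
  have hFc : Continuous F := continuous_iff_continuousAt.2 fun y => (hF y).continuousAt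
  have hd : ∀ s : ℝ, HasDerivAt (fun s : ℝ => ∫ y, F (s • y) ∂ρ) (∫ y, gF (s • y) ⬝ᵥ y ∂ρ) s := by
    intro s
    have hcont : Continuous (Function.uncurry fun (s : ℝ) (y : Fin n → ℝ) =>
        ContinuousLinearMap.toSpanSingleton ℝ (gF (s • y) ⬝ᵥ y)) :=
      (ContinuousLinearMap.toSpanSingletonCLE (𝕜 := ℝ) (E := ℝ)).continuous.comp
        (by fun_prop : Continuous fun p : ℝ × (Fin n → ℝ) => gF (p.1 • p.2) ⬝ᵥ p.2)
    have h1 := h.hasFDerivAt_integral (F := fun (s : ℝ) y => F (s • y))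
      (F' := fun s y => ContinuousLinearMap.toSpanSingleton ℝ (gF (s • y) ⬝ᵥ y))
      (fun s => by fun_prop) hcont (fun s y => by
        have := hasDerivAt_line hF 0 y s
        simp only [zero_add] at this
        exact this.hasFDerivAt) s
    have h2 := h1.hasDerivAt
    rw [ContinuousLinearMap.integral_apply
      (h.integrable_left (by exact hcont.comp (Continuous.prodMk_right s)))] at h2
    simpa using h2
  have hle : ∀ s ∈ Set.Ioo (0 : ℝ) 1, ∫ y, gF (s • y) ⬝ᵥ y ∂ρ ≤ σ.real Set.univ * (s * β) := by
    intro s hs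
    refine h.integral_dotProduct_self_le (gF := fun y => gF (s • y))
      (HF := fun y => s • HF (s • y)) (fun y => ?_) (by fun_prop) fun y hy => ?_
    · have h1 := (hg (s • y)).comp y ((hasFDerivAt_id y).const_smul s)
      have hL : mulVecCLM (s • HF (s • y)) =
          (mulVecCLM (HF (s • y))).comp (s • ContinuousLinearMap.id ℝ (Fin n → ℝ)) := by
        ext1 v
        simp [Matrix.smul_mulVec]
      rw [hL]
      exact h1
    · rw [Matrix.trace_smul, smul_eq_mul]
      refine mul_le_mul_of_nonneg_left (hβ _ ?_) hs.1.le
      rw [mem_closedBall_zero_iff] at hy ⊢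
      rw [norm_smul, Real.norm_eq_abs, abs_of_pos hs.1]
      nlinarith [hs.1, hs.2, norm_nonneg y]
  have hd2 : ∀ s : ℝ, HasDerivAt
      (fun s : ℝ => ∫ y, F (s • y) ∂ρ - σ.real Set.univ * β / 2 * s ^ 2)
      (∫ y, gF (s • y) ⬝ᵥ y ∂ρ - σ.real Set.univ * β / 2 * (2 * s)) s := by
    intro s
    have := (hd s).fun_sub ((hasDerivAt_pow 2 s).const_mul (σ.real Set.univ * β / 2))
    simpa using this
  have hanti := antitoneOn_of_deriv_nonpos (convex_Icc (0 : ℝ) 1)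
    (fun s _ => (hd2 s).continuousAt.continuousWithinAt)
    (fun s _ => (hd2 s).differentiableAt.differentiableWithinAt) (fun s hs => by
      rw [interior_Icc] at hs
      rw [(hd2 s).deriv]
      linarith [hle s hs])
  have := hanti (Set.left_mem_Icc.2 zero_le_one) (Set.right_mem_Icc.2 zero_le_one) zero_le_one
  simp only [one_smul, zero_smul, integral_const, probReal_univ] at this
  norm_num at this
  linarith

section Affine

variable {f : (Fin n → ℝ) → ℝ} {g : (Fin n → ℝ) → Fin n → ℝ}
  {H : (Fin n → ℝ) → Matrix (Fin n) (Fin n) ℝ}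

lemma _root_.hasFDerivAt_comp_affine (hf : ∀ x, HasFDerivAt f (dotCLM (g x)) x)
    (Λ : Matrix (Fin n) (Fin n) ℝ) (x y : Fin n → ℝ) :
    HasFDerivAt (fun y => f (x + Λ *ᵥ y)) (dotCLM (Λᵀ *ᵥ g (x + Λ *ᵥ y))) y := by
  have h1 := (hf (x + Λ *ᵥ y)).comp y ((mulVecCLM Λ).hasFDerivAt.const_add x)
  have hL : dotCLM (Λᵀ *ᵥ g (x + Λ *ᵥ y)) = (dotCLM (g (x + Λ *ᵥ y))).comp (mulVecCLM Λ) := by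
    ext1 v
    simp [Matrix.dotProduct_mulVec, Matrix.mulVec_transpose]
  rw [hL]
  exact h1

lemma _root_.hasFDerivAt_vec_comp_affine (hg : ∀ x, HasFDerivAt g (mulVecCLM (H x)) x)
    (K Λ : Matrix (Fin n) (Fin n) ℝ) (x y : Fin n → ℝ) :
    HasFDerivAt (fun y => K *ᵥ g (x + Λ *ᵥ y)) (mulVecCLM (K * H (x + Λ *ᵥ y) * Λ)) y := by
  have h1 := (hg (x + Λ *ᵥ y)).comp y ((mulVecCLM Λ).hasFDerivAt.const_add x)
  have h2 := (mulVecCLM K).hasFDerivAt.comp y h1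
  have hL : mulVecCLM (K * H (x + Λ *ᵥ y) * Λ) =
      (mulVecCLM K).comp ((mulVecCLM (H (x + Λ *ᵥ y))).comp (mulVecCLM Λ)) := by
    ext1 v
    simp [Matrix.mul_assoc]
  rw [hL]
  exact h2

/-- Average first-order growth is controlled by the trace of the Hessian. -/
lemma integral_grad_dotProduct_le (h : IsSteinPair ρ σ)
    (hg : ∀ y, HasFDerivAt g (mulVecCLM (H y)) y) (hH : Continuous H)
    (L : Matrix (Fin n) (Fin n) ℝ) (s : ℝ) (x : Fin n → ℝ)
    (hβ : ∀ y ∈ Metric.closedBall (0 : Fin n → ℝ) 1,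
      s * (L * Lᵀ * H (x + (s • L) *ᵥ y)).trace ≤ β) :
    ∫ y, g (x + (s • L) *ᵥ y) ⬝ᵥ (L *ᵥ y) ∂ρ ≤ σ.real Set.univ * β := by
  have h1 := h.integral_dotProduct_self_le (hasFDerivAt_vec_comp_affine hg Lᵀ (s • L) x)
    (by fun_prop) (β := β) (fun y hy => by
      refine le_of_eq_of_le ?_ (hβ y hy)
      rw [Matrix.mul_smul, Matrix.trace_smul, smul_eq_mul, Matrix.mul_assoc L, Matrix.trace_mul_comm L])
  refine le_of_eq_of_le (integral_congr_ae (Filter.Eventually.of_forall fun y => ?_)) h1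
  simp [Matrix.dotProduct_mulVec, Matrix.mulVec_transpose]

/-- Average second-order growth is controlled by the trace of the Hessian. -/
lemma integral_affine_sub_le (h : IsSteinPair ρ σ)
    (hf : ∀ y, HasFDerivAt f (dotCLM (g y)) y)
    (hg : ∀ y, HasFDerivAt g (mulVecCLM (H y)) y) (hH : Continuous H)
    (L : Matrix (Fin n) (Fin n) ℝ) (s : ℝ) (x : Fin n → ℝ)
    (hβ : ∀ y ∈ Metric.closedBall (0 : Fin n → ℝ) 1,
      s ^ 2 * (L * Lᵀ * H (x + (s • L) *ᵥ y)).trace ≤ β) :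
    ∫ y, f (x + (s • L) *ᵥ y) ∂ρ - f x ≤ σ.real Set.univ * β / 2 := by
  have h1 := h.integral_sub_le (hasFDerivAt_comp_affine hf (s • L) x)
    (hasFDerivAt_vec_comp_affine hg (s • L)ᵀ (s • L) x)
    (by fun_prop) (β := β) (fun y hy => by
      refine le_of_eq_of_le ?_ (hβ y hy)
      rw [Matrix.mul_smul, Matrix.trace_smul, smul_eq_mul, Matrix.transpose_smul,
        Matrix.smul_mul, Matrix.smul_mul, Matrix.trace_smul, smul_eq_mul,
        Matrix.mul_assoc L, Matrix.trace_mul_comm L]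
      ring)
  simpa using h1

end Affine

end IsSteinPair

section MatrixInequalities

variable {n : ℕ}

open scoped MatrixOrder in
lemma Matrix.PosSemidef.exists_eq_mul_transpose {A : Matrix (Fin n) (Fin n) ℝ}
    (hA : A.PosSemidef) : ∃ L : Matrix (Fin n) (Fin n) ℝ, A = L * Lᵀ := by
  obtain ⟨C, hC⟩ := CStarAlgebra.nonneg_iff_eq_star_mul_self.1 hA.nonneg
  refine ⟨Cᵀ, ?_⟩
  rw [hC, transpose_transpose, star_eq_conjTranspose, conjTranspose_eq_transpose_of_trivial]

lemma Matrix.PosDef.log_det_le {P : Matrix (Fin n) (Fin n) ℝ} (hP : P.PosDef) :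
    Real.log P.det ≤ P.trace - n := by
  rw [hP.isHermitian.det_eq_prod_eigenvalues, hP.isHermitian.trace_eq_sum_eigenvalues]
  simp only [RCLike.ofReal_real_eq_id, id]
  rw [Real.log_prod fun i _ => (hP.eigenvalues_pos i).ne']
  have : (n : ℝ) = ∑ i : Fin n, (1 : ℝ) := by simp
  rw [this, ← Finset.sum_sub_distrib]
  exact Finset.sum_le_sum fun i _ => Real.log_le_sub_one_of_pos (hP.eigenvalues_pos i)

/-- Concavity of `log det`, in the form of a tangent inequality. -/
lemma Matrix.PosDef.log_det_sub_log_det_le {P Q : Matrix (Fin n) (Fin n) ℝ} (hP : P.PosDef)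
    (hQ : Q.PosDef) : Real.log Q.det - Real.log P.det ≤ (P⁻¹ * Q).trace - n := by
  obtain ⟨L, hL⟩ := hP.inv.posSemidef.exists_eq_mul_transpose
  have hdet : (Lᵀ * Q * L).det = P.det⁻¹ * Q.det := by
    rw [det_mul, det_mul, mul_right_comm, ← det_mul, ← Ring.inverse_eq_inv', ← det_nonsing_inv,
      hL, det_mul, det_mul, mul_comm Lᵀ.det]
  have hpos : 0 < (Lᵀ * Q * L).det := by
    rw [hdet]
    exact mul_pos (inv_pos.2 hP.det_pos) hQ.det_pos
  have hpsd : (Lᵀ * Q * L).PosSemidef := by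
    simpa using hQ.posSemidef.conjTranspose_mul_mul_same L
  have h := (hpsd.posDef_iff_det_ne_zero.2 hpos.ne').log_det_le
  rw [hdet, Real.log_mul (inv_pos.2 hP.det_pos).ne' hQ.det_pos.ne', Real.log_inv,
    Matrix.trace_mul_comm, ← Matrix.mul_assoc, ← hL] at h
  linarith

lemma Matrix.PosDef.two_mul_dotProduct_le {G : Matrix (Fin n) (Fin n) ℝ} (hG : G.PosDef)
    (t : ℝ) (a v : Fin n → ℝ) :
    2 * t * (a ⬝ᵥ v) - t ^ 2 * (v ⬝ᵥ (G *ᵥ v)) ≤ a ⬝ᵥ (G⁻¹ *ᵥ a) := by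
  have h := hG.inv.posSemidef.dotProduct_mulVec_nonneg (a - t • (G *ᵥ v))
  have hGG : G⁻¹ *ᵥ (G *ᵥ v) = v := by
    rw [mulVec_mulVec, nonsing_inv_mul _ hG.det_pos.ne'.isUnit, one_mulVec]
  have hs : (G *ᵥ v) ⬝ᵥ (G⁻¹ *ᵥ a) = v ⬝ᵥ a := by
    have hGt : Gᵀ = G := by simpa using hG.isHermitian.eq
    rw [dotProduct_comm, dotProduct_mulVec, ← mulVec_transpose, hGt, mulVec_mulVec,
      mul_nonsing_inv _ hG.det_pos.ne'.isUnit, one_mulVec, dotProduct_comm]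
  simp only [star_trivial, mulVec_sub, mulVec_smul, hGG, sub_dotProduct, dotProduct_sub,
    smul_dotProduct, dotProduct_smul, smul_eq_mul, hs] at h
  rw [dotProduct_comm v a, dotProduct_comm (G *ᵥ v) v] at h
  linarith

/-- Strong convexity from a lower bound on the Hessian. -/
lemma quadratic_lower_bound {W : (Fin n → ℝ) → ℝ} {gW : (Fin n → ℝ) → Fin n → ℝ}
    {HW : (Fin n → ℝ) → Matrix (Fin n) (Fin n) ℝ} {K : Matrix (Fin n) (Fin n) ℝ}
    (hW : ∀ x, HasFDerivAt W (dotCLM (gW x)) x) (hgW : ∀ x, HasFDerivAt gW (mulVecCLM (HW x)) x)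
    (hK : ∀ x, (HW x - K).PosSemidef) (p v : Fin n → ℝ) :
    W p + gW p ⬝ᵥ v + v ⬝ᵥ (K *ᵥ v) / 2 ≤ W (p + v) := by
  set Q := v ⬝ᵥ (K *ᵥ v) with hQ
  have hd1 : ∀ t : ℝ, HasDerivAt (fun s : ℝ => W (p + s • v) - Q / 2 * s ^ 2)
      (gW (p + t • v) ⬝ᵥ v - Q / 2 * (2 * t)) t := fun t => by
    have := (hasDerivAt_line hW p v t).fun_sub ((hasDerivAt_pow 2 t).const_mul (Q / 2))
    simpa using this
  have hd2 : ∀ t : ℝ, HasDerivAt (fun s : ℝ => gW (p + s • v) ⬝ᵥ v - Q / 2 * (2 * s))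
      ((HW (p + t • v) *ᵥ v) ⬝ᵥ v - Q / 2 * (2 * 1)) t := fun t =>
    (hasDerivAt_line_dot hgW p v t).fun_sub
      (((hasDerivAt_id t).const_mul 2).const_mul (Q / 2))
  have hm := monotone_of_hasDerivAt_nonneg hd2 fun t => by
    have := (hK (p + t • v)).dotProduct_mulVec_nonneg v
    simp only [star_trivial, sub_mulVec, dotProduct_sub] at this
    rw [dotProduct_comm] at this
    simp only [Pi.zero_apply]
    linarith
  obtain ⟨c, hc, hc'⟩ := exists_hasDerivAt_eq_slope _ _ zero_lt_one
    (fun t _ => (hd1 t).continuousAt.continuousWithinAt) fun t _ => hd1 t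
  have h0 := hm hc.1.le
  simp only at h0
  rw [hc'] at h0
  simp only [zero_smul, one_smul, add_zero] at h0
  norm_num at h0
  linarith

end MatrixInequalities

namespace IsSteinPair

variable {n : ℕ} {ρ σ : Measure (Fin n → ℝ)}

lemma integral_const_dotProduct (h : IsSteinPair ρ σ) (v : Fin n → ℝ)
    {f : (Fin n → ℝ) → Fin n → ℝ} (hf : Continuous f) :
    ∫ y, v ⬝ᵥ f y ∂ρ = v ⬝ᵥ fun i => ∫ y, f y i ∂ρ := by
  simp only [dotProduct]
  rw [integral_finsetSum _ fun i _ => h.integrable_left (by fun_prop)]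
  simp_rw [integral_const_mul]

lemma integral_trace_mul (h : IsSteinPair ρ σ) (K : Matrix (Fin n) (Fin n) ℝ)
    {f : (Fin n → ℝ) → Matrix (Fin n) (Fin n) ℝ} (hf : Continuous f) :
    ∫ y, (K * f y).trace ∂ρ = (K * Matrix.of fun i j => ∫ y, f y i j ∂ρ).trace := by
  have hfe : ∀ i j, Continuous fun y => f y i j := fun i j => hf.matrix_elem i j
  simp only [Matrix.trace, Matrix.diag, Matrix.mul_apply, Matrix.of_apply]
  rw [integral_finsetSum _ fun i _ => h.integrable_left (by fun_prop)]
  refine Finset.sum_congr rfl fun i _ => ?_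
  rw [integral_finsetSum _ fun i _ => h.integrable_left (by fun_prop)]
  simp_rw [integral_const_mul]

lemma integral_mulVec_apply (h : IsSteinPair ρ σ) (K : Matrix (Fin n) (Fin n) ℝ) (i : Fin n) :
    ∫ y, (K *ᵥ y) i ∂ρ = 0 := by
  have := h.integral_const_dotProduct (K i) continuous_id
  simp only [id, h.integral_apply] at this
  simpa [dotProduct, mulVec] using this

lemma integral_quadratic (h : IsSteinPair ρ σ) (K : Matrix (Fin n) (Fin n) ℝ) :
    ∫ y, y ⬝ᵥ (K *ᵥ y) ∂ρ = σ.real Set.univ * K.trace := by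
  simp only [dotProduct, mulVec, Finset.mul_sum]
  rw [integral_finsetSum _ fun i _ => h.integrable_left (by fun_prop)]
  rw [Matrix.trace, Finset.mul_sum]
  refine Finset.sum_congr rfl fun i _ => ?_
  rw [integral_finsetSum _ fun i _ => h.integrable_left (by fun_prop)]
  have : ∀ j, ∫ y : Fin n → ℝ, y i * (K i j * y j) ∂ρ =
      K i j * if i = j then σ.real Set.univ else 0 := fun j => by
    rw [← h.integral_apply_mul_apply, ← integral_const_mul]
    congr 1
    ext y
    ring
  simp_rw [this]
  simp [mul_comm]

/-- The averaged Monge–Ampère inequality. -/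
lemma pointwise_inequality (h : IsSteinPair ρ σ) {V W : (Fin n → ℝ) → ℝ}
    {gW T : (Fin n → ℝ) → Fin n → ℝ} {HW B : (Fin n → ℝ) → Matrix (Fin n) (Fin n) ℝ}
    {G : Matrix (Fin n) (Fin n) ℝ} (hV : Continuous V) (hT : Continuous T) (hBc : Continuous B)
    (hW : ∀ x, HasFDerivAt W (dotCLM (gW x)) x) (hgW : ∀ x, HasFDerivAt gW (mulVecCLM (HW x)) x)
    (hG : G.PosDef) (hK : ∀ x, (HW x - G⁻¹).PosSemidef) (hB : ∀ x, (B x).PosDef)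
    (hMA : ∀ x, Real.log (B x).det = W (T x) - V x) (L Λ : Matrix (Fin n) (Fin n) ℝ)
    (hc : 0 < (L * Lᵀ * G).trace) (x : Fin n → ℝ) {β : ℝ}
    (hβ : ∫ y, V (x + Λ *ᵥ y) ∂ρ - V x ≤ β) :
    (∫ y, T (x + Λ *ᵥ y) ⬝ᵥ (L *ᵥ y) ∂ρ) ^ 2 / (2 * σ.real Set.univ * (L * Lᵀ * G).trace) - β ≤
      ((B x)⁻¹ * Matrix.of fun i j => ∫ y, B (x + Λ *ᵥ y) i j ∂ρ).trace - n -
        gW (T x) ⬝ᵥ ((fun i => ∫ y, T (x + Λ *ᵥ y) i ∂ρ) - T x) := by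
  have := h.prob
  set c := (L * Lᵀ * G).trace with hcdef
  set κ := σ.real Set.univ with hκ
  have hκ0 : 0 < κ := h.pos
  set E := ∫ y, T (x + Λ *ᵥ y) ⬝ᵥ (L *ᵥ y) ∂ρ with hE
  set t := E / (κ * c) with ht
  have hWc : Continuous W := continuous_iff_continuousAt.2 fun y => (hW y).continuousAt
  have hpt : ∀ y, gW (T x) ⬝ᵥ (T (x + Λ *ᵥ y) - T x) +
      t * ((T (x + Λ *ᵥ y) ⬝ᵥ (L *ᵥ y)) - T x ⬝ᵥ (L *ᵥ y))
      - t ^ 2 / 2 * (y ⬝ᵥ ((Lᵀ * G * L) *ᵥ y)) - (V (x + Λ *ᵥ y) - V x) ≤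
      ((B x)⁻¹ * B (x + Λ *ᵥ y)).trace - n := by
    intro y
    have h1 := (hB x).log_det_sub_log_det_le (hB (x + Λ *ᵥ y))
    rw [hMA, hMA] at h1
    have h2 := quadratic_lower_bound hW hgW hK (T x) (T (x + Λ *ᵥ y) - T x)
    rw [add_sub_cancel] at h2
    have h3 := hG.two_mul_dotProduct_le t (T (x + Λ *ᵥ y) - T x) (L *ᵥ y)
    have h4 : (L *ᵥ y) ⬝ᵥ (G *ᵥ (L *ᵥ y)) = y ⬝ᵥ ((Lᵀ * G * L) *ᵥ y) := by
      rw [← mulVec_mulVec, ← mulVec_mulVec, dotProduct_mulVec y Lᵀ, vecMul_transpose]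
    rw [h4, sub_dotProduct] at h3
    linarith
  have hTc : Continuous fun y => T (x + Λ *ᵥ y) := by fun_prop
  have hBc' : Continuous fun y => B (x + Λ *ᵥ y) := by fun_prop
  have hinteg := integral_mono (h.integrable_left (by fun_prop)) (h.integrable_left (by fun_prop)) hpt
  have i1 : Integrable (fun y => gW (T x) ⬝ᵥ (T (x + Λ *ᵥ y) - T x)) ρ :=
    h.integrable_left (by fun_prop)
  have i2 : Integrable (fun y => t * ((T (x + Λ *ᵥ y) ⬝ᵥ (L *ᵥ y)) - T x ⬝ᵥ (L *ᵥ y))) ρ :=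
    h.integrable_left (by fun_prop)
  have i3 : Integrable (fun y => t ^ 2 / 2 * (y ⬝ᵥ ((Lᵀ * G * L) *ᵥ y))) ρ :=
    h.integrable_left (by fun_prop)
  have i4 : Integrable (fun y => V (x + Λ *ᵥ y) - V x) ρ := h.integrable_left (by fun_prop)
  have e1 : ∫ y, gW (T x) ⬝ᵥ (T (x + Λ *ᵥ y) - T x) ∂ρ =
      gW (T x) ⬝ᵥ ((fun i => ∫ y, T (x + Λ *ᵥ y) i ∂ρ) - T x) := by
    rw [h.integral_const_dotProduct _ (by fun_prop)]
    congr 1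
    ext i
    simp only [Pi.sub_apply]
    rw [integral_sub (h.integrable_left (by fun_prop)) (integrable_const _)]
    simp
  have e2 : ∫ y, t * ((T (x + Λ *ᵥ y) ⬝ᵥ (L *ᵥ y)) - T x ⬝ᵥ (L *ᵥ y)) ∂ρ = t * E := by
    rw [integral_const_mul, integral_sub (h.integrable_left (by fun_prop))
      (h.integrable_left (by fun_prop)), h.integral_const_dotProduct (T x) (by fun_prop)]
    simp [h.integral_mulVec_apply, dotProduct, hE]
  have e3 : ∫ y, t ^ 2 / 2 * (y ⬝ᵥ ((Lᵀ * G * L) *ᵥ y)) ∂ρ = t ^ 2 / 2 * (κ * c) := by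
    rw [integral_const_mul, h.integral_quadratic, hcdef, Matrix.mul_assoc Lᵀ, Matrix.trace_mul_comm,
      Matrix.mul_assoc, Matrix.trace_mul_comm]
  have e4 : ∫ y, (V (x + Λ *ᵥ y) - V x) ∂ρ = ∫ y, V (x + Λ *ᵥ y) ∂ρ - V x := by
    rw [integral_sub (h.integrable_left (by fun_prop)) (integrable_const _)]
    simp
  have e5 : ∫ y, (((B x)⁻¹ * B (x + Λ *ᵥ y)).trace - n) ∂ρ =
      ((B x)⁻¹ * Matrix.of fun i j => ∫ y, B (x + Λ *ᵥ y) i j ∂ρ).trace - n := by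
    rw [integral_sub (h.integrable_left (by fun_prop)) (integrable_const _),
      h.integral_trace_mul _ hBc']
    simp
  rw [e5, integral_sub (by exact (i1.add i2).sub i3) i4, integral_sub (by exact i1.add i2) i3,
    integral_add i1 i2, e1, e2, e3, e4] at hinteg
  have e6 : t * E - t ^ 2 / 2 * (κ * c) = E ^ 2 / (2 * κ * c) := by
    rw [ht]
    field_simp
    ring
  linarith

end IsSteinPair

section Divergence

variable {n : ℕ}

lemma continuous_matrix_inv {X : Type*} [TopologicalSpace X] {B : X → Matrix (Fin n) (Fin n) ℝ}
    (hB : Continuous B) (hdet : ∀ x, (B x).det ≠ 0) : Continuous fun x => (B x)⁻¹ := by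
  simp_rw [Matrix.inv_def, Ring.inverse_eq_inv']
  exact (hB.matrix_det.inv₀ hdet).smul hB.matrix_adjugate

lemma hasCompactSupport_gradient {θ : (Fin n → ℝ) → ℝ} {gθ : (Fin n → ℝ) → Fin n → ℝ}
    (hθ : ∀ p, HasFDerivAt θ (dotCLM (gθ p)) p) (hs : HasCompactSupport θ) :
    HasCompactSupport gθ := by
  have h := hs.fderiv (𝕜 := ℝ)
  refine h.mono' fun p hp => subset_tsupport _ ?_
  rw [Function.mem_support, (hθ p).fderiv]
  contrapose! hp
  simp only [Function.mem_support, not_not]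
  ext i
  simpa using congrArg (fun l : (Fin n → ℝ) →L[ℝ] ℝ => l (Pi.single i 1)) hp

/-- Integration by parts for a compactly supported function and a vector field. -/
lemma integral_gradient_add_divergence {θ : (Fin n → ℝ) → ℝ} {gθ X : (Fin n → ℝ) → Fin n → ℝ}
    {DX : (Fin n → ℝ) → Matrix (Fin n) (Fin n) ℝ}
    (hθ : ∀ p, HasFDerivAt θ (dotCLM (gθ p)) p) (hgθ : Continuous gθ)
    (hs : HasCompactSupport θ) (hX : ∀ p, HasFDerivAt X (mulVecCLM (DX p)) p)
    (hDX : Continuous DX) :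
    ∫ p, (gθ p ⬝ᵥ X p + θ p * (DX p).trace) = 0 := by
  have hθc : Continuous θ := continuous_iff_continuousAt.2 fun y => (hθ y).continuousAt
  have hXc : Continuous X := continuous_iff_continuousAt.2 fun y => (hX y).continuousAt
  have hgs := hasCompactSupport_gradient hθ hs
  have hgsi : ∀ i, HasCompactSupport fun p => gθ p i := fun i =>
    hgs.mono fun p hp => by
      contrapose! hp
      simp only [Function.mem_support, not_not] at hp ⊢
      simp [hp]
  have hDXe : ∀ i j, Continuous fun y => DX y i j := fun i j => hDX.matrix_elem i j
  have i1 : ∀ i, Integrable fun p => gθ p i * X p i := fun i =>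
    Continuous.integrable_of_hasCompactSupport (by fun_prop) (hgsi i).mul_right
  have i2 : ∀ i, Integrable fun p => θ p * DX p i i := fun i =>
    Continuous.integrable_of_hasCompactSupport (by fun_prop) hs.mul_right
  have key : ∀ i, ∫ p, θ p * DX p i i = - ∫ p, gθ p i * X p i := by
    intro i
    have hXi := fun p => hasFDerivAt_pi_mulVecCLM.1 (hX p) i
    have e1 : ∀ p, fderiv ℝ (fun p => X p i) p (Pi.single i 1) = DX p i i := fun p => by
      rw [(hXi p).fderiv]; simp
    have e2 : ∀ p, fderiv ℝ θ p (Pi.single i 1) = gθ p i := fun p => by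
      rw [(hθ p).fderiv]; simp
    have := integral_mul_fderiv_eq_neg_fderiv_mul_of_integrable (μ := volume)
      (f := θ) (g := fun p => X p i) (v := Pi.single i 1)
      (by simpa only [e2] using i1 i) (by simpa only [e1] using i2 i)
      (Continuous.integrable_of_hasCompactSupport (by fun_prop) hs.mul_right)
      (fun p _ => (hθ p).differentiableAt) (fun p _ => (hXi p).differentiableAt)
    simpa only [e1, e2] using this
  have e : ∀ p, gθ p ⬝ᵥ X p + θ p * (DX p).trace =
      ∑ i, (gθ p i * X p i + θ p * DX p i i) := fun p => by
    rw [Finset.sum_add_distrib, ← Finset.mul_sum]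
    rfl
  simp_rw [e]
  rw [integral_finsetSum _ fun i _ => by exact (i1 i).add (i2 i)]
  refine Finset.sum_eq_zero fun i _ => ?_
  rw [integral_add (i1 i) (i2 i), key i, add_neg_cancel]

lemma integral_gibbs {W : (Fin n → ℝ) → ℝ} (hW : Continuous W) (f : (Fin n → ℝ) → ℝ) :
    ∫ x, f x ∂gibbs W = ∫ x, Real.exp (-W x) * f x :=
  integral_withDensity_ofReal (by fun_prop) (fun x => (Real.exp_pos _).le) f

/-- The localized divergence inequality for the averaged transport map. -/
lemma localized_inequality {V W u η : (Fin n → ℝ) → ℝ} {gW T N gη : (Fin n → ℝ) → Fin n → ℝ}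
    {B M : (Fin n → ℝ) → Matrix (Fin n) (Fin n) ℝ} {γ γ' : ℝ → ℝ} {D : (Fin n → ℝ) → ℝ}
    {e : (Fin n → ℝ) ≃ₜ (Fin n → ℝ)} (he : ∀ x, e x = T x)
    (hS : ∀ p, HasFDerivAt e.symm (mulVecCLM (B (e.symm p))⁻¹) p)
    (hBpos : ∀ x, (B x).PosDef) (hB : Continuous B)
    (hN : ∀ x, HasFDerivAt N (mulVecCLM (M x)) x) (hM : Continuous M)
    (hu : ∀ x, HasFDerivAt u (dotCLM (N x - T x)) x)
    (hγ : ∀ t, HasDerivAt γ (γ' t) t) (hγ'c : Continuous γ') (hγ0 : ∀ t, 0 ≤ γ t)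
    (hγ'0 : ∀ t, 0 ≤ γ' t)
    (hη : ∀ p, HasFDerivAt η (dotCLM (gη p)) p) (hgη : Continuous gη)
    (hηs : HasCompactSupport η) (hη0 : ∀ p, 0 ≤ η p)
    (hW : ∀ p, HasFDerivAt W (dotCLM (gW p)) p) (hgW : Continuous gW)
    (hmap : Measure.map T (gibbs V) = gibbs W) (hDc : Continuous D)
    (hD : ∀ x, D x ≤ ((B x)⁻¹ * M x).trace - n - gW (T x) ⬝ᵥ (N x - T x)) :
    ∫ x, η (T x) * γ (u x) * D x ∂gibbs V ≤
      ∫ x, γ (u x) * -(gη (T x) ⬝ᵥ (N x - T x)) ∂gibbs V := by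
  have hTe : T = e := funext fun x => (he x).symm
  subst hTe
  have hWc : Continuous W := continuous_iff_continuousAt.2 fun y => (hW y).continuousAt
  have hNc : Continuous N := continuous_iff_continuousAt.2 fun y => (hN y).continuousAt
  have huc : Continuous u := continuous_iff_continuousAt.2 fun y => (hu y).continuousAt
  have hηc : Continuous η := continuous_iff_continuousAt.2 fun y => (hη y).continuousAt
  have hγc : Continuous γ := continuous_iff_continuousAt.2 fun y => (hγ y).continuousAt
  have hSc : Continuous e.symm := e.symm.continuous
  have hTc : Continuous e := e.continuous
  have hBi : Continuous fun p => (B (e.symm p))⁻¹ :=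
    continuous_matrix_inv (hB.comp hSc) fun p => (hBpos _).det_pos.ne'
  have hBsymm : ∀ x, ((B x)⁻¹)ᵀ = (B x)⁻¹ := fun x => by
    simpa using (hBpos x).inv.isHermitian.eq
  set X : (Fin n → ℝ) → Fin n → ℝ := fun p => N (e.symm p) - p with hXdef
  have hXc : Continuous X := by fun_prop
  set DX : (Fin n → ℝ) → Matrix (Fin n) (Fin n) ℝ :=
    fun p => M (e.symm p) * (B (e.symm p))⁻¹ - 1 with hDXdef
  have hX : ∀ p, HasFDerivAt X (mulVecCLM (DX p)) p := by
    intro p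
    have h1 := ((hN (e.symm p)).comp p (hS p)).sub (hasFDerivAt_id p)
    have hL : mulVecCLM (DX p) = (mulVecCLM (M (e.symm p))).comp (mulVecCLM (B (e.symm p))⁻¹) -
        ContinuousLinearMap.id ℝ (Fin n → ℝ) := by
      ext1 v
      simp [hDXdef, sub_mulVec]
    rw [hL]
    exact h1
  have hDX : Continuous DX := by fun_prop
  set w : (Fin n → ℝ) → Fin n → ℝ := fun p => (B (e.symm p))⁻¹ *ᵥ X p with hwdef
  have hwc : Continuous w := by fun_prop
  have hus : ∀ p, HasFDerivAt (fun p => u (e.symm p)) (dotCLM (w p)) p := by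
    intro p
    have h1 := (hu (e.symm p)).comp p (hS p)
    have hL : dotCLM (w p) = (dotCLM (N (e.symm p) - e (e.symm p))).comp
        (mulVecCLM (B (e.symm p))⁻¹) := by
      ext1 v
      simp only [ContinuousLinearMap.comp_apply, dotCLM_apply, mulVecCLM_apply, hwdef, hXdef,
        Homeomorph.apply_symm_apply]
      rw [dotProduct_mulVec, ← mulVec_transpose, hBsymm]
    rw [hL]
    exact h1
  set θ : (Fin n → ℝ) → ℝ := fun p => η p * (Real.exp (-W p) * γ (u (e.symm p))) with hθdef
  set gθ : (Fin n → ℝ) → Fin n → ℝ := fun p =>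
    (Real.exp (-W p) * γ (u (e.symm p))) • gη p
      - (η p * (Real.exp (-W p) * γ (u (e.symm p)))) • gW p
      + (η p * (Real.exp (-W p) * γ' (u (e.symm p)))) • w p with hgθdef
  have hθ : ∀ p, HasFDerivAt θ (dotCLM (gθ p)) p := by
    intro p
    have h1 := (hW p).neg.exp
    have h2 := (hγ (u (e.symm p))).comp_hasFDerivAt p (hus p)
    have h3 := (hη p).mul (h1.mul h2)
    have hL : dotCLM (gθ p) = η p • (Real.exp (-W p) • γ' (u (e.symm p)) • dotCLM (w p) +
        γ (u (e.symm p)) • (Real.exp (-W p) • -dotCLM (gW p))) +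
        (Real.exp (-W p) * γ (u (e.symm p))) • dotCLM (gη p) := by
      ext1 v
      simp [hgθdef, add_dotProduct, sub_dotProduct]
      ring
    rw [hL]
    exact h3
  have hgθ : Continuous gθ := by fun_prop
  have hθs : HasCompactSupport θ := hηs.mul_right
  have hzero := integral_gradient_add_divergence hθ hgθ hθs hX hDX
  have hgηs := hasCompactSupport_gradient hη hηs
  have hpush : ∀ f : (Fin n → ℝ) → ℝ, Continuous f →
      ∫ x, f x ∂gibbs V = ∫ p, Real.exp (-W p) * f (e.symm p) := fun f hf => by
    rw [← integral_gibbs hWc fun p => f (e.symm p), ← hmap,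
      integral_map hTc.measurable.aemeasurable (by fun_prop)]
    simp
  rw [hpush _ (by fun_prop), hpush _ (by fun_prop)]
  simp only [Homeomorph.apply_symm_apply]
  have i0 : Integrable fun p => gθ p ⬝ᵥ X p + θ p * (DX p).trace := by
    refine Continuous.integrable_of_hasCompactSupport (by fun_prop) (HasCompactSupport.add ?_
      hθs.mul_right)
    refine (hasCompactSupport_gradient hθ hθs).mono fun p hp => ?_
    contrapose! hp
    simp only [Function.mem_support, not_not] at hp ⊢
    simp [hp]
  have i1 : Integrable fun p => Real.exp (-W p) *
      (γ (u (e.symm p)) * -(gη p ⬝ᵥ (N (e.symm p) - p))) := by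
    refine Continuous.integrable_of_hasCompactSupport (by fun_prop) ?_
    refine hgηs.mono fun p hp => ?_
    contrapose! hp
    simp only [Function.mem_support, not_not] at hp ⊢
    simp [hp]
  have i2 : Integrable fun p => Real.exp (-W p) * (η p * γ (u (e.symm p)) * D (e.symm p)) := by
    refine Continuous.integrable_of_hasCompactSupport (by fun_prop) ?_
    refine hηs.mono fun p hp => ?_
    contrapose! hp
    simp only [Function.mem_support, not_not] at hp ⊢
    simp [hp]
  have hfin := integral_mono i2 (i0.add i1) fun p => ?_
  · simp only [Pi.add_apply] at hfin
    rwa [integral_add i0 i1, hzero, zero_add] at hfin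
  · have hD' := hD (e.symm p)
    rw [Homeomorph.apply_symm_apply] at hD'
    have hq : 0 ≤ X p ⬝ᵥ w p := by
      simpa using (hBpos (e.symm p)).inv.posSemidef.dotProduct_mulVec_nonneg (X p)
    have htr : (DX p).trace = ((B (e.symm p))⁻¹ * M (e.symm p)).trace - n := by
      simp [hDXdef, Matrix.trace_mul_comm (M (e.symm p))]
    have hXp : N (e.symm p) - p = X p := rfl
    rw [hXp] at hD'
    have hc1 : 0 ≤ Real.exp (-W p) * (η p * γ (u (e.symm p))) :=
      mul_nonneg (Real.exp_pos _).le (mul_nonneg (hη0 p) (hγ0 _))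
    have hc2 : 0 ≤ η p * (Real.exp (-W p) * γ' (u (e.symm p))) :=
      mul_nonneg (hη0 p) (mul_nonneg (Real.exp_pos _).le (hγ'0 _))
    have h1 := mul_le_mul_of_nonneg_left hD' hc1
    have h2 := mul_nonneg hc2 hq
    rw [dotProduct_comm] at h2
    simp only [Pi.add_apply, hgθdef, hθdef, add_dotProduct, sub_dotProduct, smul_dotProduct,
      smul_eq_mul, htr, hXp]
    linarith

end Divergence

section Integrability

variable {n : ℕ}

lemma Matrix.PosDef.exists_mul_sum_sq_le {G : Matrix (Fin n) (Fin n) ℝ} (hG : G.PosDef) :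
    ∃ δ > 0, ∀ p : Fin n → ℝ, δ * ∑ i, p i ^ 2 ≤ p ⬝ᵥ (G⁻¹ *ᵥ p) := by
  set τ := G.trace + 1 with hτ
  have hdiag : ∀ i, 0 ≤ G i i := fun i => hG.diag_pos.le
  have hτi : ∀ i, G i i ≤ τ := fun i => by
    have := Finset.single_le_sum (f := fun i => G i i) (fun i _ => hdiag i) (Finset.mem_univ i)
    simp only [hτ, Matrix.trace, Matrix.diag]
    linarith
  have hτ0 : 0 < τ := by
    have : 0 ≤ G.trace := Finset.sum_nonneg fun i _ => hdiag i
    linarith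
  have hn : (0 : ℝ) < n + 1 := by positivity
  refine ⟨1 / ((n + 1) * τ), by positivity, fun p => ?_⟩
  have hcoord : ∀ i, p i ^ 2 / τ ≤ p ⬝ᵥ (G⁻¹ *ᵥ p) := fun i => by
    have h := hG.two_mul_dotProduct_le (p i / τ) p (Pi.single i 1)
    simp only [dotProduct_single, mul_one, mulVec_single_one, single_dotProduct, one_mul,
      Matrix.col_apply] at h
    have h1 : (p i / τ) ^ 2 * G i i ≤ (p i / τ) ^ 2 * τ :=
      mul_le_mul_of_nonneg_left (hτi i) (sq_nonneg _)
    have h2 : 2 * (p i / τ) * p i - (p i / τ) ^ 2 * τ = p i ^ 2 / τ := by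
      field_simp
      ring
    linarith
  have hQ : 0 ≤ p ⬝ᵥ (G⁻¹ *ᵥ p) := by
    simpa using hG.inv.posSemidef.dotProduct_mulVec_nonneg p
  have hsum : ∑ i, p i ^ 2 / τ ≤ n * (p ⬝ᵥ (G⁻¹ *ᵥ p)) := by
    have := Finset.sum_le_sum fun i (_ : i ∈ Finset.univ) => hcoord i
    simpa using this
  rw [← Finset.sum_div] at hsum
  calc 1 / ((n + 1) * τ) * ∑ i, p i ^ 2 = (∑ i, p i ^ 2) / τ / (n + 1) := by
        field_simp
    _ ≤ n * (p ⬝ᵥ (G⁻¹ *ᵥ p)) / (n + 1) := by gcongr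
    _ ≤ p ⬝ᵥ (G⁻¹ *ᵥ p) := by
        rw [div_le_iff₀ hn]
        nlinarith

/-- A uniformly log-concave measure has exponential moments. -/
lemma integrable_exp_norm_gibbs {W : (Fin n → ℝ) → ℝ} {gW : (Fin n → ℝ) → Fin n → ℝ}
    {HW : (Fin n → ℝ) → Matrix (Fin n) (Fin n) ℝ} {G : Matrix (Fin n) (Fin n) ℝ}
    (hG : G.PosDef) (hW : ∀ x, HasFDerivAt W (dotCLM (gW x)) x)
    (hgW : ∀ x, HasFDerivAt gW (mulVecCLM (HW x)) x) (hK : ∀ x, (HW x - G⁻¹).PosSemidef) :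
    Integrable (fun p => Real.exp ‖p‖) (gibbs W) := by
  have hWc : Continuous W := continuous_iff_continuousAt.2 fun y => (hW y).continuousAt
  obtain ⟨δ, hδ, hQ⟩ := hG.exists_mul_sum_sq_le
  have hbound : ∀ p : Fin n → ℝ, ‖p‖ - W p ≤
      (-W 0 + ∑ i, (1 + |gW 0 i|) ^ 2 / δ) + ∑ i, -(δ / 4) * p i ^ 2 := fun p => by
    have h1 := quadratic_lower_bound hW hgW hK 0 p
    rw [zero_add] at h1
    have h2 : ‖p‖ ≤ ∑ i, |p i| := by
      refine (pi_norm_le_iff_of_nonneg (Finset.sum_nonneg fun i _ => abs_nonneg _)).2 fun i => ?_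
      exact Finset.single_le_sum (f := fun i => |p i|) (fun i _ => abs_nonneg _)
        (Finset.mem_univ i)
    have h3 : ∀ i, |p i| - gW 0 i * p i - δ / 2 * p i ^ 2 ≤
        (1 + |gW 0 i|) ^ 2 / δ + -(δ / 4) * p i ^ 2 := fun i => by
      have h4 : -(gW 0 i * p i) ≤ |gW 0 i| * |p i| := by
        rw [← abs_mul]
        exact neg_le_abs _
      have h5 : (1 + |gW 0 i|) * |p i| ≤ (1 + |gW 0 i|) ^ 2 / δ + δ / 4 * |p i| ^ 2 := by
        rw [← sub_nonneg]
        have : (1 + |gW 0 i|) ^ 2 / δ + δ / 4 * |p i| ^ 2 - (1 + |gW 0 i|) * |p i| =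
            ((1 + |gW 0 i|) - δ / 2 * |p i|) ^ 2 / δ := by
          field_simp
          ring
        rw [this]
        positivity
      rw [sq_abs] at h5
      linarith
    have h6 := Finset.sum_le_sum fun i (_ : i ∈ Finset.univ) => h3 i
    rw [Finset.sum_sub_distrib, Finset.sum_sub_distrib, ← Finset.mul_sum,
      Finset.sum_add_distrib] at h6
    have h7 : gW 0 ⬝ᵥ p = ∑ i, gW 0 i * p i := rfl
    have h8 := hQ p
    linarith
  have hinteg : Integrable fun p : Fin n → ℝ =>
      Real.exp (-W 0 + ∑ i, (1 + |gW 0 i|) ^ 2 / δ) * ∏ i, Real.exp (-(δ / 4) * p i ^ 2) :=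
    (Integrable.fintype_prod (f := fun (_ : Fin n) t => Real.exp (-(δ / 4) * t ^ 2))
      fun i => integrable_exp_neg_mul_sq (by positivity)).const_mul _
  rw [integrable_withDensity_iff_integrable_smul' (measurable_gibbs_density hWc)
    (Filter.Eventually.of_forall fun x => ENNReal.ofReal_lt_top)]
  simp only [ENNReal.toReal_ofReal (Real.exp_pos _).le, smul_eq_mul]
  refine hinteg.mono' (by fun_prop) (Filter.Eventually.of_forall fun p => ?_)
  rw [← Real.exp_add, ← Real.exp_sum,
    ← Real.exp_add, Real.norm_eq_abs, Real.abs_exp, Real.exp_le_exp]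
  linarith [hbound p]

lemma IsSteinPair.integrable_average {ρ σ : Measure (Fin n → ℝ)} (h : IsSteinPair ρ σ)
    {V : (Fin n → ℝ) → ℝ} {T : (Fin n → ℝ) → Fin n → ℝ} (hV : Continuous V) (hT : Continuous T)
    (Λ : Matrix (Fin n) (Fin n) ℝ) {β : ℝ}
    (hβ : ∀ x, ∫ y, V (x + Λ *ᵥ y) ∂ρ - V x ≤ β)
    (hexp : Integrable (fun x => Real.exp ‖T x‖) (gibbs V)) (i : Fin n) :
    Integrable (fun x => ∫ y, T (x + Λ *ᵥ y) i ∂ρ) (gibbs V) := by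
  have := h.prob
  have hTi : Continuous fun x => ∫ y, T (x + Λ *ᵥ y) i ∂ρ :=
    h.continuous_integral (f := fun x y => T (x + Λ *ᵥ y) i) (by fun_prop)
  rw [integrable_withDensity_iff_integrable_smul' (measurable_gibbs_density hV)
    (Filter.Eventually.of_forall fun x => ENNReal.ofReal_lt_top)] at hexp ⊢
  simp only [ENNReal.toReal_ofReal (Real.exp_pos _).le, smul_eq_mul, ← Real.exp_add] at hexp ⊢
  have hbound : ∀ x, |Real.exp (-V x) * ∫ y, T (x + Λ *ᵥ y) i ∂ρ| ≤
      Real.exp β * ∫ y, Real.exp (-V (x + Λ *ᵥ y) + ‖T (x + Λ *ᵥ y)‖) ∂ρ := fun x => by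
    have i1 : Integrable (fun y => ‖T (x + Λ *ᵥ y)‖) ρ := h.integrable_left (by fun_prop)
    have i2 : Integrable (fun y => V (x + Λ *ᵥ y)) ρ := h.integrable_left (by fun_prop)
    have h1 : |∫ y, T (x + Λ *ᵥ y) i ∂ρ| ≤ Real.exp (∫ y, ‖T (x + Λ *ᵥ y)‖ ∂ρ) := by
      refine le_trans ?_ (Real.add_one_le_exp _)
      refine le_add_of_le_of_nonneg ?_ zero_le_one
      refine (abs_integral_le_integral_abs).trans
        (integral_mono (h.integrable_left (by fun_prop)) i1 fun y => ?_)
      exact norm_le_pi_norm (T (x + Λ *ᵥ y)) i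
    have h2 : Real.exp (∫ y, (-V (x + Λ *ᵥ y) + ‖T (x + Λ *ᵥ y)‖) ∂ρ) ≤
        ∫ y, Real.exp (-V (x + Λ *ᵥ y) + ‖T (x + Λ *ᵥ y)‖) ∂ρ :=
      convexOn_exp.map_integral_le Real.continuous_exp.continuousOn isClosed_univ
        (Filter.Eventually.of_forall fun _ => Set.mem_univ _) (h.integrable_left (by fun_prop))
        (h.integrable_left (by fun_prop))
    rw [integral_add (by exact i2.neg) i1, integral_neg] at h2
    rw [abs_mul, Real.abs_exp]
    calc Real.exp (-V x) * |∫ y, T (x + Λ *ᵥ y) i ∂ρ|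
        ≤ Real.exp (-V x) * Real.exp (∫ y, ‖T (x + Λ *ᵥ y)‖ ∂ρ) := by gcongr
      _ ≤ Real.exp (β - ∫ y, V (x + Λ *ᵥ y) ∂ρ) * Real.exp (∫ y, ‖T (x + Λ *ᵥ y)‖ ∂ρ) := by
          gcongr
          linarith [hβ x]
      _ = Real.exp β * Real.exp (-∫ y, V (x + Λ *ᵥ y) ∂ρ + ∫ y, ‖T (x + Λ *ᵥ y)‖ ∂ρ) := by
          rw [← Real.exp_add, ← Real.exp_add]
          congr 1
          ring
      _ ≤ _ := by gcongr
  have hinteg : Integrable fun x =>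
      Real.exp β * ∫ y, Real.exp (-V (x + Λ *ᵥ y) + ‖T (x + Λ *ᵥ y)‖) ∂ρ := by
    refine Integrable.const_mul ?_ _
    have hc : Continuous fun z : (Fin n → ℝ) × (Fin n → ℝ) =>
      Real.exp (-V (z.1 + Λ *ᵥ z.2) + ‖T (z.1 + Λ *ᵥ z.2)‖) := by fun_prop
    have hprod : Integrable (fun z : (Fin n → ℝ) × (Fin n → ℝ) =>
        Real.exp (-V (z.1 + Λ *ᵥ z.2) + ‖T (z.1 + Λ *ᵥ z.2)‖)) (volume.prod ρ) := by
      rw [integrable_prod_iff' hc.aestronglyMeasurable]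
      refine ⟨Filter.Eventually.of_forall fun y => hexp.comp_add_right (Λ *ᵥ y), ?_⟩
      have e : ∀ y, ∫ x, ‖Real.exp (-V (x + Λ *ᵥ y) + ‖T (x + Λ *ᵥ y)‖)‖ =
          ∫ x, ‖Real.exp (-V x + ‖T x‖)‖ := fun y =>
        integral_add_right_eq_self (fun x => ‖Real.exp (-V x + ‖T x‖)‖) (Λ *ᵥ y)
      simp only [e]
      exact integrable_const _
    exact hprod.integral_prod_left
  exact hinteg.mono' (by fun_prop) (Filter.Eventually.of_forall hbound)

end Integrability

section Limits

variable {n : ℕ}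

lemma exists_cutoff (n : ℕ) : ∃ (χ : (Fin n → ℝ) → ℝ) (gχ : (Fin n → ℝ) → Fin n → ℝ) (C : ℝ),
    (∀ p, HasFDerivAt χ (dotCLM (gχ p)) p) ∧ Continuous gχ ∧ HasCompactSupport χ ∧
    (∀ p, 0 ≤ χ p) ∧ (∀ p, χ p ≤ 1) ∧ (∀ p, ‖p‖ ≤ 1 → χ p = 1) ∧ ∀ p i, |gχ p i| ≤ C := by
  let f : ContDiffBump (0 : Fin n → ℝ) := ⟨1, 2, one_pos, one_lt_two⟩
  have hf : ContDiff ℝ 2 f := f.contDiff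
  have hd := hasFDerivAt_dotCLM_gradVec hf
  have hgc : Continuous (gradVec f) := (contDiff_gradVec hf).continuous
  have hgs := hasCompactSupport_gradient hd f.hasCompactSupport
  obtain ⟨C, hC⟩ := hgc.bounded_above_of_compact_support hgs
  refine ⟨f, gradVec f, C, hd, hgc, f.hasCompactSupport, fun p => f.nonneg, fun p => f.le_one,
    fun p hp => f.one_of_mem_closedBall (by simpa [f] using hp), fun p i => ?_⟩
  exact (norm_le_pi_norm (gradVec f p) i).trans (hC p)

lemma exists_radius {V W u χ : (Fin n → ℝ) → ℝ} {gW T N gχ : (Fin n → ℝ) → Fin n → ℝ}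
    {B M : (Fin n → ℝ) → Matrix (Fin n) (Fin n) ℝ} {γ γ' : ℝ → ℝ} {D : (Fin n → ℝ) → ℝ} {C : ℝ}
    {e : (Fin n → ℝ) ≃ₜ (Fin n → ℝ)} (he : ∀ x, e x = T x)
    (hS : ∀ p, HasFDerivAt e.symm (mulVecCLM (B (e.symm p))⁻¹) p)
    (hBpos : ∀ x, (B x).PosDef) (hB : Continuous B)
    (hN : ∀ x, HasFDerivAt N (mulVecCLM (M x)) x) (hM : Continuous M)
    (hu : ∀ x, HasFDerivAt u (dotCLM (N x - T x)) x)
    (hγ : ∀ t, HasDerivAt γ (γ' t) t) (hγ'c : Continuous γ') (hγ0 : ∀ t, 0 ≤ γ t)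
    (hγ1 : ∀ t, γ t ≤ 1) (hγ'0 : ∀ t, 0 ≤ γ' t)
    (hχ : ∀ p, HasFDerivAt χ (dotCLM (gχ p)) p) (hgχ : Continuous gχ)
    (hχs : HasCompactSupport χ) (hχ0 : ∀ p, 0 ≤ χ p) (hC : ∀ p i, |gχ p i| ≤ C)
    (hW : ∀ p, HasFDerivAt W (dotCLM (gW p)) p) (hgW : Continuous gW)
    (hmap : Measure.map T (gibbs V) = gibbs W) (hDc : Continuous D)
    (hD : ∀ x, D x ≤ ((B x)⁻¹ * M x).trace - n - gW (T x) ⬝ᵥ (N x - T x))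
    (hinteg : ∀ i, Integrable (fun x => N x i - T x i) (gibbs V)) {ε : ℝ} (hε : 0 < ε) (R₀ : ℝ) :
    ∃ R, R₀ ≤ R ∧ 0 < R ∧ ∫ x, χ (R⁻¹ • T x) * γ (u x) * D x ∂gibbs V ≤ ε := by
  set I := ∫ x, ∑ i, C * |N x i - T x i| ∂gibbs V with hI
  have hsum : Integrable (fun x => ∑ i, C * |N x i - T x i|) (gibbs V) :=
    integrable_finsetSum _ fun i _ => (hinteg i).abs.const_mul C
  obtain ⟨R, hR₀, hR1, hRI⟩ : ∃ R, R₀ ≤ R ∧ 0 < R ∧ R⁻¹ * I ≤ ε := by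
    refine ⟨max (max R₀ 1) (I / ε), (le_max_left _ _).trans (le_max_left _ _),
      lt_of_lt_of_le one_pos ((le_max_right _ _).trans (le_max_left _ _)), ?_⟩
    have hp : 0 < max (max R₀ 1) (I / ε) :=
      lt_of_lt_of_le one_pos ((le_max_right _ _).trans (le_max_left _ _))
    rw [inv_mul_le_iff₀ hp]
    exact (div_le_iff₀ hε).1 (le_max_right _ _)
  refine ⟨R, hR₀, hR1, ?_⟩
  have hη : ∀ p, HasFDerivAt (fun p => χ (R⁻¹ • p)) (dotCLM (R⁻¹ • gχ (R⁻¹ • p))) p := by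
    intro p
    have h1 := (hχ (R⁻¹ • p)).comp p ((hasFDerivAt_id p).const_smul R⁻¹)
    have hL : dotCLM (R⁻¹ • gχ (R⁻¹ • p)) =
        (dotCLM (gχ (R⁻¹ • p))).comp (R⁻¹ • ContinuousLinearMap.id ℝ (Fin n → ℝ)) := by
      ext1 v
      simp
    rw [hL]
    exact h1
  have hmain := localized_inequality he hS hBpos hB hN hM hu hγ hγ'c hγ0 hγ'0 hη (by fun_prop)
    (hχs.comp_smul (inv_ne_zero hR1.ne')) (fun p => hχ0 _) hW hgW hmap hDc hD
  refine hmain.trans (le_trans ?_ hRI)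
  rw [hI, ← integral_const_mul]
  have hpt : ∀ x, γ (u x) * -((R⁻¹ • gχ (R⁻¹ • T x)) ⬝ᵥ (N x - T x)) ≤
      R⁻¹ * ∑ i, C * |N x i - T x i| := fun x => by
    rw [smul_dotProduct, smul_eq_mul]
    have h1 : -(gχ (R⁻¹ • T x) ⬝ᵥ (N x - T x)) ≤ ∑ i, C * |N x i - T x i| := by
      refine (neg_le_abs _).trans ((Finset.abs_sum_le_sum_abs _ _).trans
        (Finset.sum_le_sum fun i _ => ?_))
      rw [abs_mul]
      exact mul_le_mul_of_nonneg_right (hC _ i) (abs_nonneg _)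
    have h2 : 0 ≤ ∑ i, C * |N x i - T x i| :=
      Finset.sum_nonneg fun i _ => mul_nonneg ((abs_nonneg _).trans (hC 0 i)) (abs_nonneg _)
    have h3 : γ (u x) * -(gχ (R⁻¹ • T x) ⬝ᵥ (N x - T x)) ≤ ∑ i, C * |N x i - T x i| :=
      (mul_le_mul_of_nonneg_left h1 (hγ0 _)).trans (mul_le_of_le_one_left h2 (hγ1 _))
    have h4 := mul_le_mul_of_nonneg_left h3 (inv_pos.2 hR1).le
    linarith
  by_cases hi : Integrable (fun x => γ (u x) * -((R⁻¹ • gχ (R⁻¹ • T x)) ⬝ᵥ (N x - T x))) (gibbs V)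
  · exact integral_mono hi (hsum.const_mul _) hpt
  · rw [integral_undef hi]
    refine integral_nonneg fun x => mul_nonneg (inv_pos.2 hR1).le (Finset.sum_nonneg fun i _ =>
      mul_nonneg ((abs_nonneg _).trans (hC 0 i)) (abs_nonneg _))

/-- If functions bounded below by `-b` have asymptotically nonpositive integrals, then a
nonnegative pointwise limit vanishes almost everywhere. -/
lemma ae_eq_zero_of_tendsto {X : Type*} [MeasurableSpace X] {μ : Measure X}
    [IsProbabilityMeasure μ] {F : ℕ → X → ℝ} {f : X → ℝ} {a : ℕ → ℝ} {b : ℝ} (hb : 0 ≤ b)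
    (hF : ∀ k, Integrable (F k) μ) (hFb : ∀ k x, -b ≤ F k x) (hFa : ∀ k, ∫ x, F k x ∂μ ≤ a k)
    (ha : Filter.Tendsto a Filter.atTop (nhds 0)) (hf : Measurable f) (hf0 : ∀ x, 0 ≤ f x)
    (hlim : ∀ x, Filter.Tendsto (fun k => F k x) Filter.atTop (nhds (f x))) :
    f =ᵐ[μ] 0 := by
  have hfatou := lintegral_liminf_le' (u := Filter.atTop) (μ := μ) (f := fun k x => ENNReal.ofReal (F k x + b))
    fun k => ((hF k).aemeasurable.add_const b).ennreal_ofReal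
  have hl : ∀ x, Filter.liminf (fun k => ENNReal.ofReal (F k x + b)) Filter.atTop =
      ENNReal.ofReal (f x) + ENNReal.ofReal b := fun x => by
    rw [← ENNReal.ofReal_add (hf0 x) hb]
    exact (ENNReal.tendsto_ofReal ((hlim x).add_const b)).liminf_eq
  have hk : ∀ k, ∫⁻ x, ENNReal.ofReal (F k x + b) ∂μ ≤ ENNReal.ofReal (a k + b) := fun k => by
    have hi : Integrable (fun x => F k x + b) μ := (hF k).add (integrable_const b)
    rw [← ofReal_integral_eq_lintegral_ofReal hi
      (Filter.Eventually.of_forall fun x => show (0 : ℝ) ≤ F k x + b by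
        linarith [hFb k x])]
    refine ENNReal.ofReal_le_ofReal ?_
    rw [integral_add (hF k) (integrable_const b)]
    simpa using hFa k
  have hr : Filter.liminf (fun k => ∫⁻ x, ENNReal.ofReal (F k x + b) ∂μ) Filter.atTop ≤
      ENNReal.ofReal b := by
    have h1 := (ENNReal.tendsto_ofReal (ha.add_const b)).liminf_eq
    rw [zero_add] at h1
    rw [← h1]
    exact Filter.liminf_le_liminf (Filter.Eventually.of_forall hk)
  simp_rw [hl] at hfatou
  rw [lintegral_add_right _ measurable_const] at hfatou
  simp only [lintegral_const, measure_univ, mul_one] at hfatou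
  have hz : ∫⁻ x, ENNReal.ofReal (f x) ∂μ = 0 := by
    have h2 : ∫⁻ x, ENNReal.ofReal (f x) ∂μ + ENNReal.ofReal b ≤ 0 + ENNReal.ofReal b := by
      rw [zero_add]
      exact hfatou.trans hr
    exact le_antisymm ((ENNReal.add_le_add_iff_right ENNReal.ofReal_ne_top).1 h2) zero_le
  rw [lintegral_eq_zero_iff hf.ennreal_ofReal] at hz
  filter_upwards [hz] with x hx
  have hx' : ENNReal.ofReal (f x) = 0 := hx
  exact le_antisymm (ENNReal.ofReal_eq_zero.1 hx') (hf0 x)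

end Limits

namespace IsSteinPair

variable {n : ℕ} {ρ σ : Measure (Fin n → ℝ)} {f : (Fin n → ℝ) → ℝ}
  {g : (Fin n → ℝ) → Fin n → ℝ} {H : (Fin n → ℝ) → Matrix (Fin n) (Fin n) ℝ}

lemma _root_.eventually_abs_comp_affine_sub_lt {q : (Fin n → ℝ) → ℝ} (hq : Continuous q)
    (L : Matrix (Fin n) (Fin n) ℝ) (x : Fin n → ℝ) {ε : ℝ} (hε : 0 < ε) :
    ∀ᶠ s : ℝ in nhds 0, ∀ y ∈ Metric.closedBall (0 : Fin n → ℝ) 1,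
      |q (x + (s • L) *ᵥ y) - q x| < ε := by
  refine (isCompact_closedBall _ _).eventually_forall_of_forall_eventually fun y _ => ?_
  have hc : Continuous fun z : ℝ × (Fin n → ℝ) => |q (x + (z.1 • L) *ᵥ z.2) - q x| := by fun_prop
  refine hc.continuousAt.eventually_lt continuousAt_const ?_
  simpa using hε

lemma tendsto_grad (h : IsSteinPair ρ σ) (hg : ∀ y, HasFDerivAt g (mulVecCLM (H y)) y)
    (hH : Continuous H) (L : Matrix (Fin n) (Fin n) ℝ) (x : Fin n → ℝ) :
    Filter.Tendsto (fun s : ℝ => (∫ y, g (x + (s • L) *ᵥ y) ⬝ᵥ (L *ᵥ y) ∂ρ) / s)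
      (nhdsWithin 0 (Set.Ioi 0)) (nhds (σ.real Set.univ * (L * Lᵀ * H x).trace)) := by
  have hκ := h.pos
  rw [Metric.tendsto_nhds]
  intro ε hε
  have hε' : 0 < ε / (2 * σ.real Set.univ) := by positivity
  have hev := eventually_abs_comp_affine_sub_lt (q := fun x => (L * Lᵀ * H x).trace) (by fun_prop) L x
    hε'
  filter_upwards [nhdsWithin_le_nhds hev, self_mem_nhdsWithin] with s hs hs0
  have hs0' : 0 < s := hs0
  have hup := h.integral_grad_dotProduct_le hg hH L s x
    (β := s * ((L * Lᵀ * H x).trace + ε / (2 * σ.real Set.univ))) fun y hy =>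
      mul_le_mul_of_nonneg_left (by linarith [(abs_lt.1 (hs y hy)).2]) hs0'.le
  have hneg : ∀ y, HasFDerivAt (fun y => -g y) (mulVecCLM (-H y)) y := fun y => by
    have hL : mulVecCLM (-H y) = -mulVecCLM (H y) := by
      ext1 v
      simp [neg_mulVec]
    rw [hL]
    exact (hg y).neg
  have hlo := h.integral_grad_dotProduct_le hneg hH.neg L s x
    (β := s * (-(L * Lᵀ * H x).trace + ε / (2 * σ.real Set.univ))) fun y hy => by
      refine mul_le_mul_of_nonneg_left ?_ hs0'.le
      rw [Matrix.mul_neg, Matrix.trace_neg]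
      linarith [(abs_lt.1 (hs y hy)).1]
  simp only [neg_dotProduct, integral_neg] at hlo
  have e1 : σ.real Set.univ * (s * ((L * Lᵀ * H x).trace + ε / (2 * σ.real Set.univ))) =
      (σ.real Set.univ * (L * Lᵀ * H x).trace + ε / 2) * s := by
    field_simp
  have e2 : σ.real Set.univ * (s * (-(L * Lᵀ * H x).trace + ε / (2 * σ.real Set.univ))) =
      -((σ.real Set.univ * (L * Lᵀ * H x).trace - ε / 2) * s) := by
    field_simp
    ring
  rw [e1, ← div_le_iff₀ hs0'] at hup
  rw [e2, neg_le_neg_iff, ← le_div_iff₀ hs0'] at hlo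
  rw [Real.dist_eq, abs_lt]
  constructor <;> linarith

lemma tendsto_average (h : IsSteinPair ρ σ) (hf : ∀ y, HasFDerivAt f (dotCLM (g y)) y)
    (hg : ∀ y, HasFDerivAt g (mulVecCLM (H y)) y)
    (hH : Continuous H) (L : Matrix (Fin n) (Fin n) ℝ) (x : Fin n → ℝ) :
    Filter.Tendsto (fun s : ℝ => 2 / (σ.real Set.univ * s ^ 2) *
      (∫ y, f (x + (s • L) *ᵥ y) ∂ρ - f x))
      (nhdsWithin 0 (Set.Ioi 0)) (nhds (L * Lᵀ * H x).trace) := by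
  have hκ := h.pos
  rw [Metric.tendsto_nhds]
  intro ε hε
  have hε' : 0 < ε / 2 := by positivity
  have hev := eventually_abs_comp_affine_sub_lt (q := fun x => (L * Lᵀ * H x).trace) (by fun_prop) L x
    hε'
  filter_upwards [nhdsWithin_le_nhds hev, self_mem_nhdsWithin] with s hs hs0
  have hs0' : 0 < s := hs0
  have hup := h.integral_affine_sub_le hf hg hH L s x
    (β := s ^ 2 * ((L * Lᵀ * H x).trace + ε / 2)) fun y hy =>
      mul_le_mul_of_nonneg_left (by linarith [(abs_lt.1 (hs y hy)).2]) (sq_nonneg s)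
  have hnegf : ∀ y, HasFDerivAt (fun y => -f y) (dotCLM (-g y)) y := fun y => by
    have hL : dotCLM (-g y) = -dotCLM (g y) := by
      ext1 v
      simp [neg_dotProduct]
    rw [hL]
    exact (hf y).neg
  have hneg : ∀ y, HasFDerivAt (fun y => -g y) (mulVecCLM (-H y)) y := fun y => by
    have hL : mulVecCLM (-H y) = -mulVecCLM (H y) := by
      ext1 v
      simp [neg_mulVec]
    rw [hL]
    exact (hg y).neg
  have hlo := h.integral_affine_sub_le hnegf hneg hH.neg L s x
    (β := s ^ 2 * (-(L * Lᵀ * H x).trace + ε / 2)) fun y hy => by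
      refine mul_le_mul_of_nonneg_left ?_ (sq_nonneg s)
      rw [Matrix.mul_neg, Matrix.trace_neg]
      linarith [(abs_lt.1 (hs y hy)).1]
  rw [integral_neg] at hlo
  set I := ∫ y, f (x + (s • L) *ᵥ y) ∂ρ - f x with hI
  have hc : 0 < 2 / (σ.real Set.univ * s ^ 2) := by positivity
  have h1 := mul_le_mul_of_nonneg_left hup hc.le
  have hlo' : -I ≤ σ.real Set.univ * (s ^ 2 * (-(L * Lᵀ * H x).trace + ε / 2)) / 2 := by
    rw [hI]
    linarith
  have h2 := mul_le_mul_of_nonneg_left hlo' hc.le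
  have e : ∀ b : ℝ, 2 / (σ.real Set.univ * s ^ 2) * (σ.real Set.univ * (s ^ 2 * b) / 2) = b :=
    fun b => by field_simp
  rw [e] at h1 h2
  rw [Real.dist_eq, abs_lt]
  constructor <;> linarith

end IsSteinPair

section Conclusion

variable {n : ℕ}

/-- The trace of the product of a Gram matrix with a positive definite matrix only vanishes when
the former does. -/
lemma Matrix.PosDef.eq_zero_or_trace_pos {G : Matrix (Fin n) (Fin n) ℝ} (hG : G.PosDef)
    (L : Matrix (Fin n) (Fin n) ℝ) : L = 0 ∨ 0 < (L * Lᵀ * G).trace := by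
  have htr : (L * Lᵀ * G).trace = ∑ j, (fun i => L i j) ⬝ᵥ (G *ᵥ fun i => L i j) := by
    rw [Matrix.mul_assoc, Matrix.trace_mul_comm, Matrix.trace]
    refine Finset.sum_congr rfl fun j _ => ?_
    rw [Matrix.diag_apply, Matrix.mul_assoc, Matrix.mul_apply]
    rfl
  by_cases hL : L = 0
  · exact Or.inl hL
  · right
    obtain ⟨j, hj⟩ : ∃ j, (fun i => L i j) ≠ 0 := by
      by_contra! hcon
      exact hL (by ext i j; exact congrFun (hcon j) i)
    rw [htr]
    refine Finset.sum_pos' (fun k _ => ?_) ⟨j, Finset.mem_univ j, ?_⟩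
    · simpa using hG.posSemidef.dotProduct_mulVec_nonneg (fun i => L i k)
    · simpa using hG.dotProduct_mulVec_pos hj

lemma exists_hasDerivAt_smoothTransition_affine {a : ℝ} (ha : 0 ≤ a) (θ : ℝ) :
    ∃ γ' : ℝ → ℝ, (∀ t, HasDerivAt (fun t => Real.smoothTransition (a * t - θ)) (γ' t) t) ∧
      Continuous γ' ∧ ∀ t, 0 ≤ γ' t := by
  have hc : ContDiff ℝ 1 fun t : ℝ => Real.smoothTransition (a * t - θ) :=
    Real.smoothTransition.contDiff.comp (by fun_prop)
  have hm : Monotone fun t : ℝ => Real.smoothTransition (a * t - θ) := fun t₁ t₂ ht =>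
    Real.smoothTransition.monotone (sub_le_sub_right (mul_le_mul_of_nonneg_left ht ha) θ)
  exact ⟨_, fun t => (hc.differentiable one_ne_zero t).hasDerivAt, hc.continuous_deriv le_rfl,
    fun t => hm.deriv_nonneg⟩

lemma smoothTransition_mul_nonneg {q α c κ : ℝ} (hc : 0 < c) (hκ : 0 < κ) :
    0 ≤ Real.smoothTransition (q - √(α * c)) * ((κ * q) ^ 2 / (2 * κ * c) - κ * α / 2) := by
  rcases le_or_gt q √(α * c) with hq | hq
  · rw [Real.smoothTransition.zero_of_nonpos (by linarith), zero_mul]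
  · refine mul_nonneg (Real.smoothTransition.nonneg _) ?_
    have h1 : α * c ≤ q ^ 2 := (Real.sqrt_le_left ((Real.sqrt_nonneg _).trans hq.le)).1 hq.le
    have h2 : (κ * q) ^ 2 / (2 * κ * c) - κ * α / 2 = κ / (2 * c) * (q ^ 2 - α * c) := by
      field_simp
    rw [h2]
    exact mul_nonneg (by positivity) (by linarith)

lemma le_sqrt_of_smoothTransition_mul_eq_zero {q α c κ : ℝ} (hc : 0 < c) (hκ : 0 < κ)
    (h : Real.smoothTransition (q - √(α * c)) * ((κ * q) ^ 2 / (2 * κ * c) - κ * α / 2) = 0) :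
    q ≤ √(α * c) := by
  by_contra! hq
  have h1 : α * c < q ^ 2 := (Real.sqrt_lt' ((Real.sqrt_nonneg _).trans_lt hq)).1 hq
  have h2 : (κ * q) ^ 2 / (2 * κ * c) - κ * α / 2 = κ / (2 * c) * (q ^ 2 - α * c) := by
    field_simp
  have h3 : 0 < κ / (2 * c) * (q ^ 2 - α * c) := mul_pos (by positivity) (by linarith)
  rw [h2] at h
  exact (mul_pos (Real.smoothTransition.pos_of_pos (by linarith)) h3).ne' h

/-- Data of a regular Brenier map `T = ∇Φ` between two Gibbs measures, together with its Jacobian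
`B`, its inverse `e.symm` and the derivatives of the two potentials. -/
structure IsRegularBrenier (V W Φ : (Fin n → ℝ) → ℝ) (gV gW T : (Fin n → ℝ) → Fin n → ℝ)
    (HV HW B : (Fin n → ℝ) → Matrix (Fin n) (Fin n) ℝ) (e : (Fin n → ℝ) ≃ₜ (Fin n → ℝ)) :
    Prop where
  hasFDerivAt_source : ∀ x, HasFDerivAt V (dotCLM (gV x)) x
  hasFDerivAt_source_grad : ∀ x, HasFDerivAt gV (mulVecCLM (HV x)) x
  continuous_source_hess : Continuous HV
  hasFDerivAt_target : ∀ x, HasFDerivAt W (dotCLM (gW x)) x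
  hasFDerivAt_target_grad : ∀ x, HasFDerivAt gW (mulVecCLM (HW x)) x
  hasFDerivAt_potential : ∀ x, HasFDerivAt Φ (dotCLM (T x)) x
  hasFDerivAt_map : ∀ x, HasFDerivAt T (mulVecCLM (B x)) x
  continuous_jacobian : Continuous B
  posDef_jacobian : ∀ x, (B x).PosDef
  log_det : ∀ x, Real.log (B x).det = W (T x) - V x
  map_eq : Measure.map T (gibbs V) = gibbs W
  equiv_apply : ∀ x, e x = T x
  hasFDerivAt_symm : ∀ p, HasFDerivAt e.symm (mulVecCLM (B (e.symm p))⁻¹) p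

lemma exists_isRegularBrenier {V W Φ : (Fin n → ℝ) → ℝ} (hV : ContDiff ℝ 2 V)
    (hW : ContDiff ℝ 2 W) (hΦ : ContDiff ℝ 2 Φ) (hconv : ConvexOn ℝ Set.univ Φ)
    (hmap : Measure.map (gradVec Φ) (gibbs V) = gibbs W) :
    ∃ e, IsRegularBrenier V W Φ (gradVec V) (gradVec W) (gradVec Φ) (hessMat V) (hessMat W)
      (hessMat Φ) e := by
  have hT := hasFDerivAt_dotCLM_gradVec hΦ
  have hB := hasFDerivAt_gradVec hΦ
  have hpsd := posSemidef_hessMat_of_convexOn hconv hΦ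
  have hMA := monge_ampere hV.continuous hW.continuous hconv hT hB (continuous_hessMat hΦ) hpsd hmap
  have hdet : ∀ x, (hessMat Φ x).det ≠ 0 := fun x h0 => by
    have := hMA x
    rw [h0, zero_mul] at this
    exact (Real.exp_pos _).ne this
  have hpos : ∀ x, (hessMat Φ x).PosDef := fun x =>
    (hpsd x).posDef_iff_det_ne_zero.2 (hdet x)
  have hTc : Continuous (gradVec Φ) := (contDiff_gradVec hΦ).continuous
  obtain ⟨e, he, hS⟩ := exists_inverse (contDiff_gradVec hΦ) hB hdet
    ⟨fun x y hxy => hconv.grad_eq_imp_eq hT hB (hpos x) hxy,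
      hconv.surjective_of_denseRange hT (denseRange_of_map_gibbs hW.continuous hTc hmap)⟩
  refine ⟨e, hasFDerivAt_dotCLM_gradVec hV, hasFDerivAt_gradVec hV, continuous_hessMat hV,
    hasFDerivAt_dotCLM_gradVec hW, hasFDerivAt_gradVec hW, hT, hB, continuous_hessMat hΦ, hpos,
    fun x => ?_, hmap, he, hS⟩
  have h1 := congrArg Real.log (hMA x)
  rw [Real.log_mul (hdet x) (Real.exp_pos _).ne', Real.log_exp, Real.log_exp] at h1
  linarith

namespace IsRegularBrenier

variable {V W Φ χ : (Fin n → ℝ) → ℝ} {gV gW T gχ : (Fin n → ℝ) → Fin n → ℝ}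
  {HV HW B : (Fin n → ℝ) → Matrix (Fin n) (Fin n) ℝ} {e : (Fin n → ℝ) ≃ₜ (Fin n → ℝ)}
  {ρ σ : Measure (Fin n → ℝ)} {L G : Matrix (Fin n) (Fin n) ℝ} {α θ C : ℝ}

lemma continuous_source (hb : IsRegularBrenier V W Φ gV gW T HV HW B e) : Continuous V :=
  continuous_iff_continuousAt.2 fun x => (hb.hasFDerivAt_source x).continuousAt

lemma continuous_target_grad (hb : IsRegularBrenier V W Φ gV gW T HV HW B e) : Continuous gW :=
  continuous_iff_continuousAt.2 fun x => (hb.hasFDerivAt_target_grad x).continuousAt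

lemma continuous_potential (hb : IsRegularBrenier V W Φ gV gW T HV HW B e) : Continuous Φ :=
  continuous_iff_continuousAt.2 fun x => (hb.hasFDerivAt_potential x).continuousAt

lemma continuous_map (hb : IsRegularBrenier V W Φ gV gW T HV HW B e) : Continuous T :=
  continuous_iff_continuousAt.2 fun x => (hb.hasFDerivAt_map x).continuousAt

lemma integrable_exp_norm_map (hb : IsRegularBrenier V W Φ gV gW T HV HW B e) (hG : G.PosDef)
    (hK : ∀ x, (HW x - G⁻¹).PosSemidef) :
    Integrable (fun x => Real.exp ‖T x‖) (gibbs V) := by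
  have h1 := integrable_exp_norm_gibbs hG hb.hasFDerivAt_target hb.hasFDerivAt_target_grad hK
  rw [← hb.map_eq] at h1
  exact h1.comp_measurable hb.continuous_map.measurable

/-- The increment of the averaged potential, rescaled by the mesh `s` and cut off below `θ`. -/
def cutIncrement (Φ : (Fin n → ℝ) → ℝ) (ρ : Measure (Fin n → ℝ)) (κ : ℝ)
    (L : Matrix (Fin n) (Fin n) ℝ) (θ s : ℝ) (x : Fin n → ℝ) : ℝ :=
  Real.smoothTransition (2 / (κ * s ^ 2) * (∫ y, Φ (x + (s • L) *ᵥ y) ∂ρ - Φ x) - θ)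

/-- The lower bound for the drifted operator applied to the averaged increment of `Φ`. -/
def defect (T : (Fin n → ℝ) → Fin n → ℝ) (ρ : Measure (Fin n → ℝ)) (κ : ℝ)
    (L : Matrix (Fin n) (Fin n) ℝ) (α c s : ℝ) (x : Fin n → ℝ) : ℝ :=
  (∫ y, T (x + (s • L) *ᵥ y) ⬝ᵥ (L *ᵥ y) ∂ρ) ^ 2 / (2 * κ * c) - κ * (s ^ 2 * α) / 2

lemma continuous_defect (hb : IsRegularBrenier V W Φ gV gW T HV HW B e) (h : IsSteinPair ρ σ)
    (κ c s : ℝ) : Continuous (defect T ρ κ L α c s) := by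
  have hT := hb.continuous_map
  have h1 : Continuous fun x => ∫ y, T (x + (s • L) *ᵥ y) ⬝ᵥ (L *ᵥ y) ∂ρ :=
    h.continuous_integral (by fun_prop)
  unfold defect
  fun_prop

lemma continuous_cutIncrement (hb : IsRegularBrenier V W Φ gV gW T HV HW B e)
    (h : IsSteinPair ρ σ) (κ s : ℝ) : Continuous (cutIncrement Φ ρ κ L θ s) := by
  have hT := hb.continuous_potential
  have h1 : Continuous fun x => ∫ y, Φ (x + (s • L) *ᵥ y) ∂ρ :=
    h.continuous_integral (by fun_prop)
  exact Real.smoothTransition.continuous.comp (by fun_prop)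

lemma exists_radius_defect (hb : IsRegularBrenier V W Φ gV gW T HV HW B e)
    (h : IsSteinPair ρ σ) (hG : G.PosDef) (hK : ∀ x, (HW x - G⁻¹).PosSemidef)
    (hα : ∀ x, (L * Lᵀ * HV x).trace ≤ α) (hc : 0 < (L * Lᵀ * G).trace)
    (hχ : ∀ p, HasFDerivAt χ (dotCLM (gχ p)) p) (hgχ : Continuous gχ)
    (hχs : HasCompactSupport χ) (hχ0 : ∀ p, 0 ≤ χ p) (hC : ∀ p i, |gχ p i| ≤ C)
    (θ s : ℝ) {ε : ℝ} (hε : 0 < ε) (R₀ : ℝ) :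
    ∃ R, R₀ ≤ R ∧ 0 < R ∧ ∫ x, χ (R⁻¹ • T x) * cutIncrement Φ ρ (σ.real Set.univ) L θ s x *
      defect T ρ (σ.real Set.univ) L α (L * Lᵀ * G).trace s x ∂gibbs V ≤ ε := by
  have hT := hb.continuous_map
  have hBc := hb.continuous_jacobian
  have hκ := h.pos
  have hβ : ∀ x, ∫ y, V (x + (s • L) *ᵥ y) ∂ρ - V x ≤ σ.real Set.univ * (s ^ 2 * α) / 2 :=
    fun x => h.integral_affine_sub_le hb.hasFDerivAt_source hb.hasFDerivAt_source_grad
      hb.continuous_source_hess L s x fun y _ =>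
        mul_le_mul_of_nonneg_left (hα _) (sq_nonneg s)
  have hexp := hb.integrable_exp_norm_map hG hK
  obtain ⟨γ', hγ, hγ'c, hγ'0⟩ := exists_hasDerivAt_smoothTransition_affine
    (a := 2 / (σ.real Set.univ * s ^ 2)) (by positivity) θ
  have hu : ∀ x, HasFDerivAt (fun x => ∫ y, Φ (x + (s • L) *ᵥ y) ∂ρ - Φ x)
      (dotCLM ((fun i => ∫ y, T (x + (s • L) *ᵥ y) i ∂ρ) - T x)) x := fun x => by
    have hL : ∀ a b : Fin n → ℝ, dotCLM (a - b) = dotCLM a - dotCLM b := fun a b => by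
      ext1 v
      simp [sub_dotProduct]
    rw [hL]
    exact (h.hasFDerivAt_average hb.hasFDerivAt_potential hT (s • L) x).sub
      (hb.hasFDerivAt_potential x)
  have hM : Continuous fun x => Matrix.of fun i j => ∫ y, B (x + (s • L) *ᵥ y) i j ∂ρ :=
    continuous_matrix fun i j => h.continuous_integral (by fun_prop)
  refine exists_radius hb.equiv_apply hb.hasFDerivAt_symm hb.posDef_jacobian hBc
    (h.hasFDerivAt_average_vec hb.hasFDerivAt_map hBc (s • L)) hM hu hγ hγ'c
    (fun _ => Real.smoothTransition.nonneg _) (fun _ => Real.smoothTransition.le_one _) hγ'0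
    hχ hgχ hχs hχ0 hC hb.hasFDerivAt_target hb.continuous_target_grad hb.map_eq
    (hb.continuous_defect h _ _ s) (fun x => h.pointwise_inequality hb.continuous_source hT hBc
      hb.hasFDerivAt_target hb.hasFDerivAt_target_grad hG hK hb.posDef_jacobian hb.log_det L
      (s • L) hc x (hβ x)) (fun i => ?_) hε R₀
  refine (h.integrable_average hb.continuous_source hT (s • L) hβ hexp i).sub
    (hexp.mono' (by fun_prop) (Filter.Eventually.of_forall fun x => ?_))
  exact (norm_le_pi_norm (T x) i).trans ((by linarith : ‖T x‖ ≤ ‖T x‖ + 1).trans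
    (Real.add_one_le_exp _))

lemma tendsto_cutIncrement (hb : IsRegularBrenier V W Φ gV gW T HV HW B e)
    (h : IsSteinPair ρ σ) (θ : ℝ) (x : Fin n → ℝ) :
    Filter.Tendsto (fun s => cutIncrement Φ ρ (σ.real Set.univ) L θ s x)
      (nhdsWithin 0 (Set.Ioi 0)) (nhds (Real.smoothTransition ((L * Lᵀ * B x).trace - θ))) :=
  (Real.smoothTransition.continuous.tendsto _).comp
    ((h.tendsto_average hb.hasFDerivAt_potential hb.hasFDerivAt_map hb.continuous_jacobian
      L x).sub_const θ)

lemma tendsto_defect (hb : IsRegularBrenier V W Φ gV gW T HV HW B e)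
    (h : IsSteinPair ρ σ) (α c : ℝ) (x : Fin n → ℝ) :
    Filter.Tendsto (fun s => (s ^ 2)⁻¹ * defect T ρ (σ.real Set.univ) L α c s x)
      (nhdsWithin 0 (Set.Ioi 0)) (nhds ((σ.real Set.univ * (L * Lᵀ * B x).trace) ^ 2 /
        (2 * σ.real Set.univ * c) - σ.real Set.univ * α / 2)) := by
  refine ((((h.tendsto_grad hb.hasFDerivAt_map hb.continuous_jacobian L x).pow 2).div_const
    (2 * σ.real Set.univ * c)).sub_const (σ.real Set.univ * α / 2)).congr' ?_
  filter_upwards [self_mem_nhdsWithin] with s hs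
  have hs' : s ≠ 0 := (Set.mem_Ioi.1 hs).ne'
  unfold defect
  field_simp

lemma trace_le_sqrt (hb : IsRegularBrenier V W Φ gV gW T HV HW B e)
    [IsProbabilityMeasure (gibbs V)] (hG : G.PosDef) (hK : ∀ x, (HW x - G⁻¹).PosSemidef)
    (hα0 : 0 < α) (hα : ∀ x, (L * Lᵀ * HV x).trace ≤ α) (hc : 0 < (L * Lᵀ * G).trace)
    (x : Fin n → ℝ) : (L * Lᵀ * B x).trace ≤ √(α * (L * Lᵀ * G).trace) := by
  obtain ⟨ρ, σ, h⟩ := exists_isSteinPair n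
  obtain ⟨χ, gχ, C, hχ, hgχ, hχs, hχ0, hχ1, hχe, hC⟩ := exists_cutoff n
  have hκ := h.pos
  have hT := hb.continuous_map
  have hBc := hb.continuous_jacobian
  have hχc : Continuous χ := continuous_iff_continuousAt.2 fun x => (hχ x).continuousAt
  set κ := σ.real Set.univ
  set c := (L * Lᵀ * G).trace
  set θ := √(α * c)
  let s : ℕ → ℝ := fun k => 1 / ((k : ℝ) + 1)
  have hs : ∀ k, 0 < s k := fun k => by positivity
  have hs0 : Filter.Tendsto s Filter.atTop (nhds 0) := tendsto_one_div_add_atTop_nhds_zero_nat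
  have hsw : Filter.Tendsto s Filter.atTop (nhdsWithin 0 (Set.Ioi 0)) :=
    tendsto_nhdsWithin_iff.2 ⟨hs0, Filter.Eventually.of_forall hs⟩
  choose R hRk hR0 hRint using fun k : ℕ => hb.exists_radius_defect h hG hK hα hc hχ hgχ hχs hχ0 hC
    θ (s k) (pow_pos (hs k) 3) k
  let f : (Fin n → ℝ) → ℝ := fun x => Real.smoothTransition ((L * Lᵀ * B x).trace - θ) *
    ((κ * (L * Lᵀ * B x).trace) ^ 2 / (2 * κ * c) - κ * α / 2)
  let F : ℕ → (Fin n → ℝ) → ℝ := fun k x => ((s k) ^ 2)⁻¹ *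
    (χ ((R k)⁻¹ • T x) * cutIncrement Φ ρ κ L θ (s k) x * defect T ρ κ L α c (s k) x)
  have hfc : Continuous f :=
    (Real.smoothTransition.continuous.comp (by fun_prop)).mul (by fun_prop)
  have hFi : ∀ k, Integrable (F k) (gibbs V) := fun k => by
    have hcs : HasCompactSupport fun x => χ ((R k)⁻¹ • T x) := by
      have h1 := (hχs.comp_smul (inv_ne_zero (hR0 k).ne')).comp_homeomorph e
      have h2 : (fun x => χ ((R k)⁻¹ • T x)) = (fun p => χ ((R k)⁻¹ • p)) ∘ e := by
        ext x
        simp [hb.equiv_apply]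
      rwa [h2]
    have hcont : Continuous fun x => χ ((R k)⁻¹ • T x) * cutIncrement Φ ρ κ L θ (s k) x *
        defect T ρ κ L α c (s k) x :=
      ((by fun_prop : Continuous fun x => χ ((R k)⁻¹ • T x)).mul
        (hb.continuous_cutIncrement h κ (s k))).mul (hb.continuous_defect h κ c (s k))
    exact (hcont.integrable_of_hasCompactSupport (hcs.mul_right.mul_right)).const_mul _
  have hFb : ∀ k x, -(κ * α / 2) ≤ F k x := fun k x => by
    have h1 : 0 ≤ χ ((R k)⁻¹ • T x) * cutIncrement Φ ρ κ L θ (s k) x :=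
      mul_nonneg (hχ0 _) (Real.smoothTransition.nonneg _)
    have h2 : χ ((R k)⁻¹ • T x) * cutIncrement Φ ρ κ L θ (s k) x ≤ 1 :=
      mul_le_one₀ (hχ1 _) (Real.smoothTransition.nonneg _) (Real.smoothTransition.le_one _)
    have h3 : -(κ * α / 2) ≤ ((s k) ^ 2)⁻¹ * defect T ρ κ L α c (s k) x := by
      have hsk := hs k
      have h4 : ((s k) ^ 2)⁻¹ * defect T ρ κ L α c (s k) x = ((s k) ^ 2)⁻¹ *
          ((∫ y, T (x + (s k • L) *ᵥ y) ⬝ᵥ (L *ᵥ y) ∂ρ) ^ 2 / (2 * κ * c)) - κ * α / 2 := by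
        unfold defect
        field_simp
      have h5 : 0 ≤ ((s k) ^ 2)⁻¹ *
          ((∫ y, T (x + (s k • L) *ᵥ y) ⬝ᵥ (L *ᵥ y) ∂ρ) ^ 2 / (2 * κ * c)) := by positivity
      linarith
    have h6 : F k x = χ ((R k)⁻¹ • T x) * cutIncrement Φ ρ κ L θ (s k) x *
        (((s k) ^ 2)⁻¹ * defect T ρ κ L α c (s k) x) := by
      simp only [F]
      ring
    rw [h6]
    have h7 : 0 < κ * α / 2 := by positivity
    nlinarith [mul_le_mul_of_nonneg_left h3 h1]
  have hFa : ∀ k, ∫ x, F k x ∂gibbs V ≤ s k := fun k => by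
    simp only [F]
    rw [integral_const_mul, inv_mul_le_iff₀ (pow_pos (hs k) 2)]
    exact (hRint k).trans_eq (by ring)
  have hlim : ∀ x, Filter.Tendsto (fun k => F k x) Filter.atTop (nhds (f x)) := fun x => by
    have h1 : Filter.Tendsto (fun k => χ ((R k)⁻¹ • T x)) Filter.atTop (nhds 1) := by
      refine tendsto_const_nhds.congr' ?_
      filter_upwards [Filter.eventually_ge_atTop ⌈‖T x‖⌉₊] with k hk
      refine (hχe _ ?_).symm
      rw [norm_smul, norm_inv, Real.norm_of_nonneg (hR0 k).le, inv_mul_le_iff₀ (hR0 k), mul_one]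
      exact (Nat.ceil_le.1 hk).trans (hRk k)
    have h2 := (h1.mul ((hb.tendsto_cutIncrement (L := L) h θ x).comp hsw)).mul
      ((hb.tendsto_defect (L := L) h α c x).comp hsw)
    rw [one_mul] at h2
    refine h2.congr fun k => ?_
    simp only [F, Function.comp_apply]
    ring
  have hae : f =ᵐ[gibbs V] 0 := ae_eq_zero_of_tendsto (by positivity) hFi hFb hFa hs0
    hfc.measurable (fun x => smoothTransition_mul_nonneg hc hκ) hlim
  have hf0 : f = 0 := (hfc.ae_eq_iff_eq volume continuous_zero).1
    ((volume_absolutelyContinuous_gibbs hb.continuous_source).ae_eq hae)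
  exact le_sqrt_of_smoothTransition_mul_eq_zero hc hκ (congrFun hf0 x)

end IsRegularBrenier

end Conclusion

/-- Anisotropic contraction theorem of de Philippis–Shenfeld type:
`div(A ∇V) ≤ α` and `∇²W ≥ G⁻¹` imply `‖div(A ∇Φ)‖_∞ ≤ √(α · Tr(AG))` for the
Brenier map `∇Φ` from `e^{-V} dx` to `e^{-W} dx`. -/
theorem divergence_contraction
    {n : ℕ} (V W : (Fin n → ℝ) → ℝ)
    (hVc2 : ContDiff ℝ 2 V) (hWc2 : ContDiff ℝ 2 W)
    (hμ : IsProbabilityMeasure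
      (volume.withDensity fun x : Fin n → ℝ => ENNReal.ofReal (Real.exp (-V x))))
    (hν : IsProbabilityMeasure
      (volume.withDensity fun x : Fin n → ℝ => ENNReal.ofReal (Real.exp (-W x))))
    (α : ℝ) (hα : 0 < α)
    (A : Matrix (Fin n) (Fin n) ℝ) (hA : A.PosSemidef)
    (G : Matrix (Fin n) (Fin n) ℝ) (hG : G.PosDef)
    (hdivV : ∀ x, (A * hessMat V x).trace ≤ α)
    (hhessW : ∀ x, (hessMat W x - G⁻¹).PosSemidef)
    (Φ : (Fin n → ℝ) → ℝ)
    (hΦc2 : ContDiff ℝ 2 Φ) (hΦconv : ConvexOn ℝ Set.univ Φ)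
    (htransport : Measure.map (gradVec Φ)
        (volume.withDensity fun x : Fin n → ℝ => ENNReal.ofReal (Real.exp (-V x))) =
      volume.withDensity fun x : Fin n → ℝ => ENNReal.ofReal (Real.exp (-W x))) :
    ∀ x, (A * hessMat Φ x).trace ≤ Real.sqrt (α * (A * G).trace) := by
  intro x
  obtain ⟨L, rfl⟩ := hA.exists_eq_mul_transpose
  obtain ⟨e, hb⟩ := exists_isRegularBrenier hVc2 hWc2 hΦc2 hΦconv htransport
  rcases hG.eq_zero_or_trace_pos L with rfl | hc
  · simp
  · exact hb.trace_le_sqrt hG hhessW hα hdivV hc x
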